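/- Let S be an unramified regular local ring of mixed characteristic p ≥ 3. Assume S[ω] and S[μ] are integrally closed (i.e. f,g ∉ S^{p∧p²}), h₁ ≠ 0, h₂ ≠ 0, and fg ∈ S^{p∧p²}. Since S/pS is a UFD, write h₁ ≡ z·c and h₂ ≡ z·e modulo pS with z ∈ S ∖ pS and c,e ∈ S whose images in S/pS are relatively prime. Set η_i := p^{−1}(ω−h₁)^i(μ−h₂)^{p−i} for 1 ≤ i ≤ p−1 and ε := p^{−1} Σ_{i=1}^{p} (−1)^i c^{p−i} e^{i−1} (μ−h₂)^{p−i} (ω−h₁)^{i−1}. Then R equals the S-submodule of K generated by A[η₁,…,η_{p−1}] ∪ {ε}; in particular the minimal number of generators of R as an S-module satisfies ν_S(R) ≤ p² + 1. -/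

import Mathlib

/-- A height one prime ideal of a commutative ring. -/
def IsHeightOnePrime {S : Type*} [CommRing S] (P : Ideal S) : Prop :=
  ∃ hP : P.IsPrime, Order.height (⟨P, hP⟩ : PrimeSpectrum S) = 1

/-- `c ∈ S` is square free if `P S_P = c S_P` for every height one prime `P` containing `c`. -/
def PaperSquarefree {S : Type*} [CommRing S] (c : S) : Prop :=
  ∀ (P : Ideal S) (hP : P.IsPrime), Order.height (⟨P, hP⟩ : PrimeSpectrum S) = 1 → c ∈ P →
    haveI := hP
    Ideal.map (algebraMap S (Localization.AtPrime P)) P =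
      Ideal.span {algebraMap S (Localization.AtPrime P) c}

/-- Two elements satisfy `𝒜₁` if no height one prime contains both of them. -/
def SatisfiesA1 {S : Type*} [CommRing S] (f g : S) : Prop :=
  ∀ P : Ideal S, IsHeightOnePrime P → ¬(f ∈ P ∧ g ∈ P)

/-- The depth of a module over a local ring: the supremum of the lengths of
regular sequences on `M` contained in the maximal ideal. -/
noncomputable def modDepth (S : Type*) [CommRing S] [IsLocalRing S]
    (M : Type*) [AddCommGroup M] [Module S M] : ℕ∞ :=
  sSup {n : ℕ∞ | ∃ rs : List S, (rs.length : ℕ∞) = n ∧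
    (∀ r ∈ rs, r ∈ IsLocalRing.maximalIdeal S) ∧ RingTheory.Sequence.IsRegular M rs}

/-- A commutative ring is Cohen-Macaulay if each of its localizations at a prime
has depth equal to its Krull dimension. -/
def IsCMRing (R : Type*) [CommRing R] : Prop :=
  ∀ (Q : Ideal R) (hQ : Q.IsPrime),
    haveI := hQ
    (modDepth (Localization.AtPrime Q) (Localization.AtPrime Q) : WithBot ℕ∞) =
      ringKrullDim (Localization.AtPrime Q)

/-- The `n`-th symbolic power of a prime ideal `P`, i.e. `Pⁿ A_P ∩ A`. -/
noncomputable def symbPow {A : Type*} [CommRing A] (P : Ideal A) (hP : P.IsPrime) (n : ℕ) :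
    Ideal A :=
  haveI := hP
  Ideal.comap (algebraMap A (Localization.AtPrime P))
    (Ideal.map (algebraMap A (Localization.AtPrime P)) (P ^ n))

/-- `ω`, as an element of the subalgebra `A = S[ω,μ]`. -/
noncomputable def omegaA {S : Type*} [CommRing S] {K : Type*} [Field K] [Algebra S K]
    (ω μ : K) : Algebra.adjoin S ({ω, μ} : Set K) :=
  ⟨ω, Algebra.subset_adjoin (Set.mem_insert _ _)⟩

/-- `μ`, as an element of the subalgebra `A = S[ω,μ]`. -/
noncomputable def muA {S : Type*} [CommRing S] {K : Type*} [Field K] [Algebra S K]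
    (ω μ : K) : Algebra.adjoin S ({ω, μ} : Set K) :=
  ⟨μ, Algebra.subset_adjoin (Set.mem_insert_of_mem _ rfl)⟩

/-- The ideal `P = (p, ω−h₁, μ−h₂)` of `A = S[ω,μ]`. -/
noncomputable def Pid {S : Type*} [CommRing S] {K : Type*} [Field K] [Algebra S K]
    (p : ℕ) (ω μ : K) (h₁ h₂ : S) : Ideal (Algebra.adjoin S ({ω, μ} : Set K)) :=
  Ideal.span {(p : Algebra.adjoin S ({ω, μ} : Set K)),
    omegaA ω μ - algebraMap S _ h₁, muA ω μ - algebraMap S _ h₂}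

/-- The colon module `(A :_K N) = {x ∈ K : x·N ⊆ A}`, as an `S`-submodule of `K`. -/
noncomputable def colonSubmodule (S : Type*) [CommRing S] (K : Type*) [Field K] [Algebra S K]
    (A : Subalgebra S K) (N : Set K) : Submodule S K where
  carrier := {x : K | ∀ z ∈ N, x * z ∈ A}
  add_mem' := fun hx hy z hz => by
    simpa [add_mul] using add_mem (hx z hz) (hy z hz)
  zero_mem' := fun z hz => by simpa using A.zero_mem
  smul_mem' := fun c x hx z hz => by
    rw [Algebra.smul_def, mul_assoc]
    exact mul_mem (A.algebraMap_mem c) (hx z hz)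

/-- `M` admits a free resolution `0 → Sⁿ → Sᵐ → M → 0`; for a finitely generated
module over a Noetherian local ring this says exactly `pd_S(M) ≤ 1`. -/
def HasFreeResLengthLE1 (S : Type*) [CommRing S] (M : Type*) [AddCommGroup M] [Module S M] :
    Prop :=
  ∃ (n m : ℕ) (φ : (Fin n → S) →ₗ[S] (Fin m → S)) (ψ : (Fin m → S) →ₗ[S] M),
    Function.Injective φ ∧ Function.Surjective ψ ∧ LinearMap.range φ = LinearMap.ker ψ

/-- The ideal `Q` contains an `S`-regular sequence of length three, i.e. `Q` has grade
(at least) three. -/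
def ContainsRegSeq3 (S : Type*) [CommRing S] (Q : Ideal S) : Prop :=
  ∃ rs : List S, rs.length = 3 ∧ (∀ r ∈ rs, r ∈ Q) ∧ RingTheory.Sequence.IsRegular S rs

/-!
Put `u = ω - h₁` and `v = μ - h₂`, so that `uᵖ` and `vᵖ` are divisible by `p`, and filter `K` by
giving `u` and `v` weight `1` and `p` weight `p`. The elements of nonnegative weight form the ring
`E = A[η₁, …, η_{p-1}]`, which is free of rank `p²` over `S`; and `p²R ⊆ E`, because the coordinates
of an integral element in the basis `ωⁱμʲ` are, up to the factor `p²`, traces which the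
squarefreeness of `fg` forces into `S`.

After localizing `S` at `(p)`, the ring `E` is local with maximal ideal generated by `u` and
`ψ = τ / u`, where `τ = cv + eu`. As `fg` is a `p`-th power modulo `p²`, the element `τᵖ / p` is a
unit multiple of `τ` plus a term of weight `2`, that is, `ψᵖ = u(βψ + γu)` with `β` a unit. Hence
`t = ψᵖ⁻¹ / u` satisfies `t² = βt + γψᵖ⁻²`, and the maximal ideal of `E` extends to a radical
principal ideal of `E[t]`, which therefore contains every integral element. Up to a unit `t` is
`τᵖ⁻¹ / p`, which is `-ε` modulo `E`.

To return to `S`, compare coordinates in the basis of `E`: among the coordinates of `pε` are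
`±cᵖ⁻¹` and `±eᵖ⁻¹`, which are relatively prime modulo `p`, so that no denominator prime to `p` is
needed. This uses unique factorization in `S / p`, that is, the Auslander–Buchsbaum theorem.
-/

section FreeResolution

universe u

/-- `M` has a finite resolution by free modules of finite rank, encoded by iterated syzygies. -/
inductive HasFiniteFreeResolution (R : Type u) [CommRing R] :
    ∀ (M : Type u) [AddCommGroup M] [Module R M], Prop
  | of_free (M : Type u) [AddCommGroup M] [Module R M] [Module.Free R M] [Module.Finite R M] :
      HasFiniteFreeResolution R M
  | of_ker {M : Type u} [AddCommGroup M] [Module R M] {n : ℕ} (f : (Fin n → R) →ₗ[R] M)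
      (hf : Function.Surjective f) (h : HasFiniteFreeResolution R (LinearMap.ker f)) :
      HasFiniteFreeResolution R M

open TensorProduct in
lemma HasFiniteFreeResolution.isStablyFree_baseChange {R : Type u} [CommRing R] {M : Type u}
    [AddCommGroup M] [Module R M] (h : HasFiniteFreeResolution R M) (B : Type u) [CommRing B]
    [Algebra R B] [Module.Flat R B] (hM : Module.Projective B (B ⊗[R] M)) :
    Module.IsStablyFree B (B ⊗[R] M) := by
  induction h with
  | of_free M => infer_instance
  | @of_ker M _ _ n f hf _ ih =>
    let N := B ⊗[R] LinearMap.ker f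
    have hexact : Function.Exact ((LinearMap.ker f).subtype.baseChange B) (f.baseChange B) :=
      lTensor_exact B (LinearMap.exact_subtype_ker_map f) hf
    have hsurj : Function.Surjective (f.baseChange B) := LinearMap.lTensor_surjective B hf
    have hinj : Function.Injective ((LinearMap.ker f).subtype.baseChange B) :=
      Module.Flat.lTensor_preserves_injective_linearMap _ (Submodule.subtype_injective _)
    obtain ⟨l, hl⟩ := Module.projective_lifting_property _ LinearMap.id hsurj
    obtain ⟨e, -, -⟩ := hexact.splitSurjectiveEquiv hinj ⟨l, hl⟩
    have : Module.Projective B (N × (B ⊗[R] M)) := .of_equiv e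
    have : Module.IsStablyFree B N :=
      ih (.of_split (.inl B N (B ⊗[R] M)) (.fst B _ _) (LinearMap.fst_comp_inl B _ _))
    have : Module.Finite B N :=
      .of_surjective (LinearMap.fst B N _ ∘ₗ e.toLinearMap) (Prod.fst_surjective.comp e.surjective)
    obtain ⟨P, _, _, _, _, _⟩ := Module.IsStablyFree.exist_free_prod B N
    have : Module.Free B ((B ⊗[R] M) × (N × P)) := .of_equiv <|
      (e ≪≫ₗ LinearEquiv.prodComm B _ _).prodCongr (LinearEquiv.refl B P) ≪≫ₗ
        LinearEquiv.prodAssoc B _ _ _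
    exact Module.IsStablyFree.of_free_prod B (B ⊗[R] M) (N × P)

open scoped Pointwise

section SMulTop

variable {R M N P Q : Type*} [CommRing R] [AddCommGroup M] [Module R M] [AddCommGroup N]
  [Module R N] [AddCommGroup P] [Module R P] [AddCommGroup Q] [Module R Q] {x : R}
  {π : M →ₗ[R] N} {F : P →ₗ[R] M}

lemma surjective_of_surjective_comp_of_ker_eq_smul_top [Module.Finite R M]
    (hx : x ∈ (⊥ : Ideal R).jacobson) (hπ : LinearMap.ker π = x • (⊤ : Submodule R M))
    (hF : Function.Surjective (π ∘ₗ F)) : Function.Surjective F := by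
  rw [← LinearMap.range_eq_top, eq_top_iff]
  refine Submodule.le_of_le_smul_of_le_jacobson_bot Module.Finite.fg_top
    ((Ideal.span_singleton_le_iff_mem _).2 hx) fun m _ ↦ ?_
  obtain ⟨v, hv⟩ := hF (π m)
  have hm : m - F v ∈ x • (⊤ : Submodule R M) := by
    rw [← hπ, LinearMap.mem_ker, map_sub, sub_eq_zero]
    exact hv.symm
  rw [Submodule.ideal_span_singleton_smul, ← add_sub_cancel (F v) m]
  exact Submodule.add_mem_sup (LinearMap.mem_range_self F v) hm

variable {ρ : P →ₗ[R] Q} {f : Q →ₗ[R] N}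

lemma surjective_restrict_ker (hF : Function.Surjective F) (hρ : Function.Surjective ρ)
    (hρx : x • (⊤ : Submodule R P) ≤ LinearMap.ker ρ)
    (hπ : LinearMap.ker π ≤ x • (⊤ : Submodule R M)) (hcomm : π ∘ₗ F = f ∘ₗ ρ)
    (hmem : ∀ v ∈ LinearMap.ker F, ρ v ∈ LinearMap.ker f) :
    Function.Surjective (ρ.restrict hmem) := by
  rintro ⟨w, hw⟩
  obtain ⟨v, rfl⟩ := hρ w
  obtain ⟨m, -, hm⟩ := hπ ((DFunLike.congr_fun hcomm v).trans hw)
  obtain ⟨v', rfl⟩ := hF m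
  have hv' : ρ (x • v') = 0 := hρx (Submodule.smul_mem_pointwise_smul v' x ⊤ trivial)
  have hm : x • F v' = F v := hm
  exact ⟨⟨v - x • v', by simp [hm]⟩, Subtype.ext (by simp [hv'])⟩

lemma ker_restrict_ker_eq_smul_top (hxM : IsSMulRegular M x)
    (hρ : LinearMap.ker ρ = x • (⊤ : Submodule R P))
    (hmem : ∀ v ∈ LinearMap.ker F, ρ v ∈ LinearMap.ker f) :
    LinearMap.ker (ρ.restrict hmem) = x • (⊤ : Submodule R (LinearMap.ker F)) := by
  ext ⟨v, hv⟩
  rw [LinearMap.mem_ker, Subtype.ext_iff]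
  change v ∈ LinearMap.ker ρ ↔ _
  simp only [hρ, Submodule.mem_smul_pointwise_iff_exists, Submodule.mem_top, true_and,
    Subtype.ext_iff, Subtype.exists, Submodule.coe_smul, exists_prop, LinearMap.mem_ker]
  refine exists_congr fun w ↦ ⟨?_, And.right⟩
  rintro rfl
  exact ⟨hxM.right_eq_zero_of_smul (by simpa using hv), rfl⟩

end SMulTop

lemma ker_compLeft_mk_span_singleton {R : Type*} [CommRing R] (x : R) (ι : Type*) :
    LinearMap.ker ((Algebra.linearMap R (R ⧸ Ideal.span {x})).compLeft ι) =
      x • (⊤ : Submodule R (ι → R)) := by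
  ext v
  have : v ∈ LinearMap.ker ((Algebra.linearMap R (R ⧸ Ideal.span {x})).compLeft ι) ↔
      ∀ i, ∃ w, v i = x * w := by
    simp [funext_iff, Ideal.Quotient.eq_zero_iff_mem, Ideal.mem_span_singleton, Dvd.dvd]
  simp only [this, Classical.skolem, Submodule.mem_smul_pointwise_iff_exists, Submodule.mem_top,
    true_and, funext_iff, Pi.smul_apply, smul_eq_mul, eq_comm]

lemma HasFiniteFreeResolution.of_quotient_span_singleton {R : Type u} [CommRing R]
    [IsNoetherianRing R] {x : R} (hx : x ∈ (⊥ : Ideal R).jacobson) (hxR : IsSMulRegular R x)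
    {N : Type u} [AddCommGroup N] [Module (R ⧸ Ideal.span {x}) N]
    (h : HasFiniteFreeResolution (R ⧸ Ideal.span {x}) N) :
    ∀ [Module R N] [IsScalarTower R (R ⧸ Ideal.span {x}) N] {M : Type u} [AddCommGroup M]
      [Module R M] [Module.Finite R M] (_ : IsSMulRegular M x) {π : M →ₗ[R] N}
      (_ : Function.Surjective π) (_ : LinearMap.ker π = x • (⊤ : Submodule R M)),
      HasFiniteFreeResolution R M := by
  induction h with
  | of_free N =>
    intro _ _ M _ _ _ hxM π hπ hker
    have := Module.finitePresentation_of_finite R M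
    let e : QuotSMulTop x M ≃ₗ[R] N :=
      (Submodule.quotEquivOfEq _ _ hker.symm) ≪≫ₗ π.quotKerEquivOfSurjective hπ
    have : Module.Free (R ⧸ Ideal.span {x}) (QuotSMulTop x M) :=
      .of_equiv (e.extendScalarsOfSurjective Ideal.Quotient.mk_surjective).symm
    have := (Module.free_quotSMulTop_iff_free R M hx hxM).1 this
    exact .of_free M
  | @of_ker N _ _ n f hf _ ih =>
    intro _ _ M _ _ _ hxM π hπ hker
    let ρ := (Algebra.linearMap R (R ⧸ Ideal.span {x})).compLeft (Fin n)
    have hρ : Function.Surjective ρ := Ideal.Quotient.mk_surjective.comp_left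
    have hρx := ker_compLeft_mk_span_singleton x (Fin n)
    obtain ⟨F, hF⟩ := Module.projective_lifting_property π (f.restrictScalars R ∘ₗ ρ) hπ
    have hFsurj : Function.Surjective F :=
      surjective_of_surjective_comp_of_ker_eq_smul_top hx hker (hF ▸ hf.comp hρ)
    have hmem : ∀ v ∈ LinearMap.ker F, ρ v ∈ LinearMap.ker (f.restrictScalars R) := fun v hv ↦
      (DFunLike.congr_fun hF v).symm.trans (by simp [LinearMap.mem_ker.1 hv])
    exact .of_ker F hFsurj (ih ((IsSMulRegular.pi fun _ ↦ hxR).submodule _ x)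
      (surjective_restrict_ker hFsurj hρ hρx.ge hker.le hF hmem)
      (ker_restrict_ker_eq_smul_top hxM hρx hmem))

end FreeResolution

section RegularLocalRing

universe u

open IsLocalRing

lemma exists_mem_span_insert_sdiff_singleton {R : Type*} [CommRing R] [IsLocalRing R] {s : Set R}
    (hs : Ideal.span s = maximalIdeal R) {x : R} (hx : x ∈ maximalIdeal R)
    (hx2 : x ∉ maximalIdeal R ^ 2) : ∃ j ∈ s, j ∈ Ideal.span (insert x (s \ {j})) := by
  classical
  obtain ⟨a, rfl⟩ := (Finsupp.mem_span_iff_linearCombination R s x).1 (hs.ge hx)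
  obtain ⟨j, hj⟩ : ∃ j, IsUnit (a j) := by
    by_contra! h
    refine hx2 ?_
    rw [Finsupp.linearCombination_apply, pow_two]
    exact sum_mem fun j _ ↦ Ideal.mul_mem_mul (h j) (hs ▸ Ideal.subset_span j.2)
  refine ⟨j, j.2, (Ideal.unit_mul_mem_iff_mem _ hj).1 ?_⟩
  have hsum : a j * j = Finsupp.linearCombination R ((↑) : s → R) a -
      Finsupp.linearCombination R ((↑) : s → R) (a.erase j) := by
    rw [eq_sub_iff_add_eq, ← smul_eq_mul, ← Finsupp.linearCombination_single, ← map_add,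
      Finsupp.single_add_erase]
  rw [hsum]
  refine sub_mem (Ideal.subset_span (Set.mem_insert _ _)) ?_
  rw [Finsupp.linearCombination_apply]
  refine sum_mem fun i hi ↦ Ideal.mul_mem_left _ _ (Ideal.subset_span (.inr ⟨i.2, fun hij ↦ ?_⟩))
  rw [Finsupp.support_erase, Finset.mem_erase] at hi
  exact hi.1 (Subtype.ext hij)

lemma spanFinrank_maximalIdeal_quotient_span_singleton_lt {R : Type*} [CommRing R]
    [IsLocalRing R] [IsNoetherianRing R] {x : R} (hx : x ∈ maximalIdeal R)
    (hx2 : x ∉ maximalIdeal R ^ 2) [IsLocalRing (R ⧸ Ideal.span {x})] :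
    (maximalIdeal (R ⧸ Ideal.span {x})).spanFinrank < (maximalIdeal R).spanFinrank := by
  obtain ⟨s, hcard, hs⟩ :=
    (IsNoetherian.noetherian (maximalIdeal R)).exists_span_finset_card_eq_spanFinrank
  obtain ⟨j, hj, hjmem⟩ := exists_mem_span_insert_sdiff_singleton hs hx hx2
  let mk := Ideal.Quotient.mk (Ideal.span {x})
  have hmap : maximalIdeal (R ⧸ Ideal.span {x}) = Ideal.span (mk '' (s \ {j})) := by
    have hx0 : mk x = 0 := Ideal.Quotient.eq_zero_iff_mem.2 (Ideal.mem_span_singleton_self x)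
    rw [← map_maximalIdeal_of_surjective mk Ideal.Quotient.mk_surjective, ← hs]
    change Ideal.map mk (Ideal.span (s : Set R)) = _
    have hsj : (s : Set R) = insert j ((s : Set R) \ {j}) :=
      (Set.insert_sdiff_self_of_mem hj).symm
    have hjmk := Ideal.mem_map_of_mem mk hjmem
    rw [Ideal.map_span, Set.image_insert_eq, hx0, Ideal.span_insert_zero] at hjmk
    rw [Ideal.map_span]
    conv_lhs => rw [hsj, Set.image_insert_eq]
    exact Submodule.span_insert_eq_span hjmk
  have hfin : ((s : Set R) \ {j}).Finite := s.finite_toSet.sdiff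
  calc (maximalIdeal (R ⧸ Ideal.span {x})).spanFinrank
      ≤ (mk '' (s \ {j})).ncard := by
        rw [hmap]
        exact Submodule.spanFinrank_span_le_ncard_of_finite (hfin.image mk)
    _ ≤ ((s : Set R) \ {j}).ncard := Set.ncard_image_le hfin
    _ < (s : Set R).ncard := Set.ncard_sdiff_singleton_lt_of_mem hj s.finite_toSet
    _ = (maximalIdeal R).spanFinrank := by rw [Set.ncard_coe_finset, hcard]

lemma isLocalRing_quotient_span_singleton {R : Type*} [CommRing R] [IsLocalRing R] {x : R}
    (hx : x ∈ maximalIdeal R) : IsLocalRing (R ⧸ Ideal.span {x}) :=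
  have : Nontrivial (R ⧸ Ideal.span {x}) := Ideal.Quotient.nontrivial_iff.2 fun h ↦
    (mem_maximalIdeal x).1 hx (Ideal.span_singleton_eq_top.1 h)
  .of_surjective' (Ideal.Quotient.mk _) Ideal.Quotient.mk_surjective

lemma isRegularLocalRing_quotient_span_singleton {R : Type*} [CommRing R] [IsRegularLocalRing R]
    {x : R} (hx : x ∈ maximalIdeal R) (hx2 : x ∉ maximalIdeal R ^ 2) :
    IsRegularLocalRing (R ⧸ Ideal.span {x}) := by
  have := isLocalRing_quotient_span_singleton hx
  refine .of_spanFinrank_maximalIdeal_le _ (ENat.WithBot.add_le_add_one_right_iff.1 ?_)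
  have hdim := ringKrullDim_le_ringKrullDim_quotient_add_card ({x} : Finset R)
    (by simpa [ringJacobson_eq_maximalIdeal] using hx)
  rw [← IsRegularLocalRing.spanFinrank_maximalIdeal, Finset.coe_singleton,
    Finset.card_singleton] at hdim
  exact le_trans (mod_cast spanFinrank_maximalIdeal_quotient_span_singleton_lt hx hx2) hdim

lemma exists_mem_maximalIdeal_notMem_sq_notMem_minimalPrimes {R : Type*} [CommRing R]
    [IsLocalRing R] [IsNoetherianRing R] (hdim : ringKrullDim R ≠ 0) :
    ∃ x ∈ maximalIdeal R, x ∉ maximalIdeal R ^ 2 ∧ ∀ P ∈ minimalPrimes R, x ∉ P := by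
  classical
  by_contra! hcon
  have hfin := minimalPrimes.finite_of_isNoetherianRing R
  have hcover : (maximalIdeal R : Set R) ⊆
      ⋃ I ∈ (insert (maximalIdeal R ^ 2) hfin.toFinset : Finset (Ideal R)), (I : Set R) := by
    intro x hx
    by_cases hx2 : x ∈ maximalIdeal R ^ 2
    · exact Set.mem_biUnion (Finset.mem_insert_self _ _) hx2
    · obtain ⟨P, hP, hxP⟩ := hcon x hx hx2
      exact Set.mem_biUnion (Finset.mem_insert_of_mem (hfin.mem_toFinset.2 hP)) hxP
  obtain ⟨I, hI, hmI⟩ := (Ideal.subset_union_prime (f := id) (maximalIdeal R ^ 2)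
    (maximalIdeal R ^ 2) fun I hI hne _ ↦
      (hfin.mem_toFinset.1 ((Finset.mem_insert.1 hI).resolve_left hne)).1.1).1 hcover
  obtain rfl | hI := Finset.mem_insert.1 hI
  · have hm : maximalIdeal R = ⊥ := Submodule.eq_bot_of_le_smul_of_le_jacobson_bot _ _
      (IsNoetherian.noetherian _) (by simpa [pow_two] using hmI)
      (jacobson_eq_maximalIdeal _ bot_ne_top).ge
    exact hdim (ringKrullDim_eq_zero_of_isField (isField_iff_maximalIdeal_eq.2 hm))
  · have hI := hfin.mem_toFinset.1 hI
    have hIprime : I.IsPrime := hI.1.1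
    obtain rfl : I = maximalIdeal R := le_antisymm (le_maximalIdeal hIprime.ne_top) hmI
    rw [← maximalIdeal_height_eq_ringKrullDim, Ideal.height_eq_zero_iff.2 hI] at hdim
    exact hdim rfl

theorem isRegularLocalRing_induction {motive : ∀ (R : Type u) [CommRing R], Prop}
    (field : ∀ (R : Type u) [CommRing R], IsField R → motive R)
    (quotient : ∀ (R : Type u) [CommRing R] [IsRegularLocalRing R], ∀ x ∈ maximalIdeal R,
      (∀ P ∈ minimalPrimes R, x ∉ P) → IsRegularLocalRing (R ⧸ Ideal.span {x}) →
      motive (R ⧸ Ideal.span {x}) → motive R)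
    (R : Type u) [CommRing R] [IsRegularLocalRing R] : motive R := by
  induction h : (maximalIdeal R).spanFinrank using Nat.strong_induction_on generalizing R with
  | _ n ih =>
    by_cases hdim : ringKrullDim R = 0
    · refine field R (isField_iff_maximalIdeal_eq.2 ?_)
      rw [← IsRegularLocalRing.spanFinrank_maximalIdeal] at hdim
      exact (Submodule.spanFinrank_eq_zero_iff_eq_bot (IsNoetherian.noetherian _)).1
        (mod_cast hdim)
    · obtain ⟨x, hx, hx2, hxP⟩ := exists_mem_maximalIdeal_notMem_sq_notMem_minimalPrimes hdim
      have := isRegularLocalRing_quotient_span_singleton hx hx2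
      exact quotient R x hx hxP this
        (ih _ (h ▸ spanFinrank_maximalIdeal_quotient_span_singleton_lt hx hx2) _ rfl)

lemma isDomain_of_isPrime_span_singleton {R : Type*} [CommRing R] [IsNoetherianRing R] {x : R}
    (hx : x ∈ (⊥ : Ideal R).jacobson) (hxP : ∀ P ∈ minimalPrimes R, x ∉ P)
    [(Ideal.span {x}).IsPrime] : IsDomain R := by
  obtain ⟨P, hP, hPx⟩ := Ideal.exists_minimalPrimes_le (I := ⊥) (J := Ideal.span {x}) bot_le
  have hPprime : P.IsPrime := hP.1.1
  have hle : P ≤ Ideal.span {x} • P := by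
    intro y hy
    obtain ⟨t, rfl⟩ := Ideal.mem_span_singleton.1 (hPx hy)
    exact Submodule.smul_mem_smul (Ideal.mem_span_singleton_self x)
      ((hPprime.mem_or_mem hy).resolve_left (hxP P hP))
  obtain rfl : P = ⊥ := Submodule.eq_bot_of_le_smul_of_le_jacobson_bot _ _
    (IsNoetherian.noetherian _) hle ((Ideal.span_singleton_le_iff_mem _).2 hx)
  exact IsDomain.of_bot_isPrime R

theorem isDomain_of_isRegularLocalRing (R : Type*) [CommRing R] [IsRegularLocalRing R] :
    IsDomain R := by
  refine isRegularLocalRing_induction (motive := fun R _ ↦ IsDomain R) (fun R _ h ↦ h.isDomain)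
    (fun R _ _ x hx hxP _ h ↦ ?_) R
  have := (Ideal.Quotient.isDomain_iff_prime _).1 h
  rw [← jacobson_eq_maximalIdeal _ bot_ne_top] at hx
  exact isDomain_of_isPrime_span_singleton hx hxP

open scoped Pointwise in
theorem hasFiniteFreeResolution_of_isRegularLocalRing (R : Type u) [CommRing R]
    [IsRegularLocalRing R] (M : Type u) [AddCommGroup M] [Module R M] [Module.Finite R M] :
    HasFiniteFreeResolution R M := by
  refine isRegularLocalRing_induction (motive := fun R _ ↦ ∀ (M : Type u) [AddCommGroup M]
    [Module R M] [Module.Finite R M], HasFiniteFreeResolution R M) ?_ ?_ R M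
  · intro R _ h M _ _ _
    let := h.toField
    exact .of_free M
  · intro R _ _ x hx hxP _ ih M _ _ _
    have := isDomain_of_isRegularLocalRing R
    have hx0 : x ≠ 0 := fun h ↦ hxP ⊥ (by simp [IsDomain.minimalPrimes_eq_singleton_bot]) h
    obtain ⟨n, f, hf⟩ := Module.Finite.exists_fin' R M
    rw [← jacobson_eq_maximalIdeal _ bot_ne_top] at hx
    have : Module.Finite (R ⧸ Ideal.span {x}) (QuotSMulTop x (LinearMap.ker f)) :=
      .of_restrictScalars_finite R _ _
    exact .of_ker f hf (.of_quotient_span_singleton hx (IsSMulRegular.of_ne_zero hx0)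
      (ih (QuotSMulTop x (LinearMap.ker f))) (IsSMulRegular.of_ne_zero hx0)
      (Submodule.mkQ_surjective _) (Submodule.ker_mkQ _))

end RegularLocalRing

section UniqueFactorization

universe u

section Principal

variable {B : Type*} [CommRing B]

open TensorProduct in
lemma exists_linearEquiv_tensor_ideal_map {D : Type*} [CommRing D] [Algebra D B]
    [Module.Flat D B] (I : Ideal D) : Nonempty (B ⊗[D] I ≃ₗ[B] I.map (algebraMap D B)) := by
  let φ : B ⊗[D] I →ₗ[B] B :=
    (AlgebraTensorModule.rid D B B).toLinearMap ∘ₗ AlgebraTensorModule.lTensor B B I.subtype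
  have hφ : Function.Injective φ := by
    simpa [φ] using Module.Flat.lTensor_preserves_injective_linearMap _ I.subtype_injective
  have hφ_tmul (b : B) (x : I) : φ (b ⊗ₜ x) = algebraMap D B x * b := by
    simp [φ, Algebra.smul_def]
  have hrange : LinearMap.range φ = I.map (algebraMap D B) := by
    refine le_antisymm ?_ (Ideal.map_le_iff_le_comap.2 fun x hx ↦ ⟨1 ⊗ₜ ⟨x, hx⟩, by simp [hφ_tmul]⟩)
    rintro _ ⟨t, rfl⟩
    induction t with
    | zero => simp
    | add s t hs ht => exact map_add φ s t ▸ add_mem hs ht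
    | tmul b x => exact hφ_tmul b x ▸ Ideal.mul_mem_right _ _ (Ideal.mem_map_of_mem _ x.2)
  exact ⟨.ofInjective φ hφ ≪≫ₗ .ofEq _ _ hrange⟩

lemma isPrincipal_of_linearEquiv {J : Ideal B} (e : J ≃ₗ[B] B) : J.IsPrincipal := by
  refine ⟨e.symm 1, le_antisymm (fun x hx ↦ Submodule.mem_span_singleton.2 ⟨e ⟨x, hx⟩, ?_⟩)
    ((Submodule.span_singleton_le_iff_mem _ _).2 (e.symm 1).2)⟩
  rw [← J.coe_smul, ← map_smul, smul_eq_mul, mul_one, e.symm_apply_apply]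

variable [IsDomain B]

lemma invertible_of_mul_eq_span_singleton {J Q : Ideal B} {c : B} (hc : c ≠ 0)
    (hJQ : J * Q = Ideal.span {c}) : Module.Invertible B J := by
  let F := FractionRing B
  have hinj : Function.Injective (algebraMap B F) := IsFractionRing.injective B F
  have hcF : algebraMap B F c ≠ 0 := (map_ne_zero_iff _ hinj).2 hc
  let ψ := (Algebra.ofId B F).toLinearMap
  have hmul : Submodule.map ψ J *
      (Submodule.span B {(algebraMap B F c)⁻¹} * Submodule.map ψ Q) = 1 := by
    rw [mul_left_comm, ← Submodule.map_mul, hJQ, ← Ideal.submodule_span_eq, Submodule.map_span,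
      Submodule.span_mul_span, Submodule.one_eq_span, Set.image_singleton,
      Set.singleton_mul_singleton]
    exact congrArg (fun t ↦ Submodule.span B {t}) (inv_mul_cancel₀ hcF)
  let U : (Submodule B F)ˣ := Units.mkOfMulEqOne _ _ hmul
  have : Module.Invertible B (Submodule.map ψ J) :=
    inferInstanceAs (Module.Invertible B (U : Submodule B F))
  exact .congr (Submodule.equivMapOfInjective ψ hinj J).symm

lemma HasFiniteFreeResolution.isPrincipal_map {D B : Type u} [CommRing D] [CommRing B]
    [IsDomain B] [Algebra D B] [Module.Flat D B] {I : Ideal D} (h : HasFiniteFreeResolution D I)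
    {Q : Ideal B} {c : B} (hc : c ≠ 0) (hIQ : I.map (algebraMap D B) * Q = Ideal.span {c}) :
    (I.map (algebraMap D B)).IsPrincipal := by
  obtain ⟨e⟩ := exists_linearEquiv_tensor_ideal_map (B := B) I
  have := invertible_of_mul_eq_span_singleton hc hIQ
  have := (h.isStablyFree_baseChange B (.of_equiv e.symm)).equiv e
  have := Module.free_of_isStablyFree_of_invertible B (I.map (algebraMap D B))
  obtain ⟨e'⟩ := Module.Invertible.free_iff_linearEquiv.1 this
  exact isPrincipal_of_linearEquiv e'

end Principal

section DetectsDvd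

variable {R : Type*} [CommRing R]

/-- Divisibility can be tested after multiplication by the ideal `J`. For nonzero ideals of a
Noetherian domain this says that `J` has grade at least two. -/
def DetectsDvd (J : Ideal R) : Prop :=
  ∀ x y : R, (∀ j ∈ J, y ∣ x * j) → y ∣ x

lemma DetectsDvd.pow {J : Ideal R} (hJ : DetectsDvd J) (n : ℕ) : DetectsDvd (J ^ n) := by
  induction n with
  | zero => exact fun x y h ↦ by simpa using h 1 (by simp)
  | succ n ih =>
    refine fun x y h ↦ ih x y fun i hi ↦ hJ _ y fun j hj ↦ ?_
    rw [mul_assoc]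
    exact h _ (pow_succ J n ▸ Ideal.mul_mem_mul hi hj)

lemma DetectsDvd.dvd_of_forall_mem_exists_dvd_mul_pow {s : Set R} (hs : s.Finite)
    (hJ : DetectsDvd (Ideal.span s)) {x y : R} (h : ∀ j ∈ s, ∃ n : ℕ, y ∣ x * j ^ n) : y ∣ x := by
  let I : Ideal R := (Ideal.span {y}).colon {x}
  have hI (r : R) : r ∈ I ↔ y ∣ x * r := by
    rw [Submodule.mem_colon_singleton, Ideal.mem_span_singleton, smul_eq_mul, mul_comm]
  have hle : Ideal.span s ≤ I.radical := Ideal.span_le.2 fun j hj ↦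
    (h j hj).imp fun n hn ↦ (hI _).2 hn
  obtain ⟨n, hn⟩ := Ideal.exists_pow_le_of_le_radical_of_fg hle (Submodule.fg_span hs)
  exact hJ.pow n x y fun j hj ↦ (hI j).1 (hn hj)

lemma mem_colon_span_singleton_iff_dvd {c e r : R} :
    r ∈ (Ideal.span {c}).colon {e} ↔ c ∣ r * e := by
  rw [Submodule.mem_colon_singleton, Ideal.mem_span_singleton, smul_eq_mul]

lemma span_pair_mul_colon (c e : R) :
    Ideal.span {c, e} * (Ideal.span {c}).colon {e} =
      Ideal.span {c} * ((Ideal.span {c}).colon {e} ⊔ (Ideal.span {e}).colon {c}) := by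
  rw [Ideal.span_insert, Ideal.sup_mul, Ideal.mul_sup]
  congr 1
  ext r
  simp only [Ideal.mem_span_singleton_mul, mem_colon_span_singleton_iff_dvd]
  constructor
  · rintro ⟨y, ⟨w, hw⟩, rfl⟩
    exact ⟨w, ⟨y, by linear_combination -hw⟩, by linear_combination -hw⟩
  · rintro ⟨w, ⟨y, hy⟩, rfl⟩
    exact ⟨y, ⟨w, by linear_combination -hy⟩, by linear_combination -hy⟩

lemma dvd_of_span_singleton_mul_le [IsDomain R] [IsIntegrallyClosed R] {I : Ideal R}
    (hI : I ≠ ⊥) (hfg : I.FG) {x y : R} (h : Ideal.span {x} * I ≤ Ideal.span {y} * I) : y ∣ x := by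
  rw [Ideal.span_singleton_mul_le_span_singleton_mul] at h
  obtain ⟨q, hqI, hq⟩ := Submodule.exists_mem_ne_zero_of_ne_bot hI
  obtain rfl | hy := eq_or_ne y 0
  · obtain ⟨q', -, h0⟩ := h q hqI
    simpa [hq] using h0
  let F := FractionRing R
  have hinj : Function.Injective (algebraMap R F) := IsFractionRing.injective R F
  have hyF : algebraMap R F y ≠ 0 := (map_ne_zero_iff _ hinj).2 hy
  have hint : IsIntegral R (algebraMap R F x / algebraMap R F y) := by
    refine isIntegral_of_smul_mem_submodule (Submodule.map (Algebra.linearMap R F) I)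
      (Submodule.ne_bot_iff _ |>.2 ⟨_, ⟨q, hqI, rfl⟩, (map_ne_zero_iff _ hinj).2 hq⟩)
      (Submodule.FG.map _ hfg) _ ?_
    rintro _ ⟨i, hi, rfl⟩
    obtain ⟨j, hj, hij⟩ := h i hi
    refine ⟨j, hj, ?_⟩
    rw [smul_eq_mul, div_mul_eq_mul_div, eq_div_iff hyF, Algebra.linearMap_apply,
      Algebra.linearMap_apply, ← map_mul, ← map_mul, hij, mul_comm]
  obtain ⟨t, ht⟩ := IsIntegrallyClosed.algebraMap_eq_of_integral hint
  exact ⟨t, hinj (by rw [map_mul, ht, mul_div_cancel₀ _ hyF])⟩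

lemma detectsDvd_colon_sup_colon [IsDomain R] [IsNoetherianRing R] [IsIntegrallyClosed R]
    {c : R} (hc : c ≠ 0) (e : R) :
    DetectsDvd ((Ideal.span {c}).colon {e} ⊔ (Ideal.span {e}).colon {c}) := by
  intro x y h
  obtain rfl | hy := eq_or_ne y 0
  · have := h c (Ideal.mem_sup_left (mem_colon_span_singleton_iff_dvd.2 (dvd_mul_right c e)))
    simp_all
  have hcmem : c ∈ (Ideal.span {c}).colon {e} :=
    mem_colon_span_singleton_iff_dvd.2 (dvd_mul_right c e)
  refine dvd_of_span_singleton_mul_le (Submodule.ne_bot_iff _ |>.2 ⟨c, hcmem, hc⟩)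
    (IsNoetherian.noetherian _) (Ideal.span_singleton_mul_le_span_singleton_mul.2 fun q hq ↦ ?_)
  obtain ⟨d, hd⟩ := h q (Ideal.mem_sup_left hq)
  obtain ⟨w, hw⟩ := mem_colon_span_singleton_iff_dvd.1 hq
  obtain ⟨d', hd'⟩ := h w (Ideal.mem_sup_right (mem_colon_span_singleton_iff_dvd.2
    ⟨q, by linear_combination -hw⟩))
  refine ⟨d, mem_colon_span_singleton_iff_dvd.2 ⟨d', mul_left_cancel₀ hy ?_⟩, hd⟩
  linear_combination x * hw - e * hd + c * hd'

end DetectsDvd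

section SumSMulX

/- Let `g` be the generic linear combination of generators of an ideal `J` which detects
divisibility. Inverting `g` makes `J` the unit ideal but creates no divisibility between elements
of `R`, so that an ideal dividing `cJ` can be studied where it is invertible. -/

open MvPolynomial

lemma eval_single_sumSMulX {R σ : Type*} [CommRing R] [DecidableEq σ] (a : σ →₀ R) (i : σ) :
    eval (Pi.single i 1) (sumSMulX a) = a i := by
  simp [sumSMulX, Finsupp.linearCombination_apply, Finsupp.sum, Pi.single_apply]

lemma map_sumSMulX {R R' σ : Type*} [CommRing R] [CommRing R'] (φ : R →+* R') (a : σ →₀ R) :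
    map φ (sumSMulX a) = sumSMulX (a.mapRange φ (map_zero φ)) := by
  simp only [sumSMulX, Finsupp.linearCombination_apply]
  rw [Finsupp.sum_mapRange_index (h := fun i r ↦ r • X i) (fun i ↦ zero_smul _ (X i)),
    Finsupp.sum, Finsupp.sum, map_sum]
  simp [smul_eq_C_mul]

variable {R : Type u} {σ : Type*} [CommRing R] {a : σ →₀ R}

lemma DetectsDvd.dvd_of_C_dvd_C_mul_sumSMulX_pow [Finite σ]
    (ha : DetectsDvd (Ideal.span (Set.range a)))
    {x y : R} {n : ℕ} (h : C y ∣ C x * sumSMulX a ^ n) : y ∣ x := by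
  classical
  refine ha.dvd_of_forall_mem_exists_dvd_mul_pow (Set.finite_range a) ?_
  rintro _ ⟨i, rfl⟩
  exact ⟨n, by simpa [eval_single_sumSMulX] using map_dvd (eval (Pi.single i 1)) h⟩

lemma DetectsDvd.exists_eq_C_mul_sumSMulX_pow [IsDomain R] [Finite σ]
    (ha : DetectsDvd (Ideal.span (Set.range a))) (ha0 : a ≠ 0) {c : R} (hc : c ≠ 0)
    {h : MvPolynomial σ R} {n : ℕ} (hh : h ∣ C c * sumSMulX a ^ n) :
    ∃ l j, h = C l * sumSMulX a ^ j := by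
  let F := FractionRing R
  have hinj : Function.Injective (algebraMap R F) := IsFractionRing.injective R F
  have hne {r : R} (hr : r ≠ 0) : algebraMap R F r ≠ 0 := (map_ne_zero_iff _ hinj).2 hr
  obtain ⟨i, hi⟩ := Finsupp.ne_iff.1 ha0
  have hprime : Prime (map (algebraMap R F) (sumSMulX a)) := by
    rw [map_sumSMulX]
    refine (irreducible_sumSMulX _ ⟨i, by simpa using hi⟩ fun r hr ↦ ?_).prime
    exact isUnit_of_dvd_unit (hr i) (hne hi).isUnit
  have hdvd : map (algebraMap R F) h ∣ map (algebraMap R F) (sumSMulX a) ^ n :=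
    ((hne hc).isUnit.map C).dvd_mul_left.1 (by simpa using map_dvd (map (algebraMap R F)) hh)
  obtain ⟨j, -, hj⟩ := (dvd_prime_pow hprime n).1 hdvd
  obtain ⟨v, hv⟩ := hj.symm
  obtain ⟨r, -, hvr⟩ := isUnit_iff_eq_C_of_isReduced.1 v.isUnit
  obtain ⟨x, y, hy, rfl⟩ := IsFractionRing.div_surjective (A := R) r
  have hy0 := nonZeroDivisors.ne_zero hy
  have heq : C y * h = C x * sumSMulX a ^ j := by
    apply map_injective _ hinj
    simp only [map_mul, map_pow, map_C, ← hv, hvr]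
    rw [mul_left_comm, ← C_mul, mul_div_cancel₀ _ (hne hy0), mul_comm]
  obtain ⟨l, rfl⟩ := ha.dvd_of_C_dvd_C_mul_sumSMulX_pow ⟨h, heq.symm⟩
  refine ⟨l, j, mul_left_cancel₀ (C_ne_zero.2 hy0) ?_⟩
  rw [heq, C_mul, mul_assoc]

lemma algebraMap_dvd_algebraMap_iff_exists_dvd_mul_pow {A B : Type*} [CommRing A] [CommRing B]
    [Algebra A B] (g : A) [IsLocalization.Away g B] {x y : A} :
    algebraMap A B y ∣ algebraMap A B x ↔ ∃ n : ℕ, y ∣ x * g ^ n := by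
  rw [← Ideal.mem_span_singleton, ← Set.image_singleton, ← Ideal.map_span,
    IsLocalization.algebraMap_mem_map_algebraMap_iff (.powers g)]
  simp [Submonoid.mem_powers_iff, Ideal.mem_span_singleton, mul_comm]

lemma exists_eq_span_singleton_algebraMap_of_away {A B : Type*} [CommRing A] [CommRing B]
    [Algebra A B] (g : A) [IsLocalization.Away g B] {J : Ideal B} (hJ : J.IsPrincipal) :
    ∃ h : A, J = Ideal.span {algebraMap A B h} := by
  obtain ⟨d, rfl⟩ := hJ
  obtain ⟨k, h, hh⟩ := IsLocalization.Away.surj g d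
  have hu := (IsLocalization.Away.algebraMap_isUnit (S := B) g).pow k
  exact ⟨h, by rw [← hh, Ideal.span_singleton_mul_right_unit hu, Ideal.submodule_span_eq]⟩

variable {B : Type u} [CommRing B] [Algebra R B] [Algebra (MvPolynomial σ R) B]
  [IsScalarTower R (MvPolynomial σ R) B] [IsLocalization.Away (sumSMulX a) B]

variable (a) in
lemma map_span_range_eq_top_of_away_sumSMulX :
    (Ideal.span (Set.range a)).map (algebraMap R B) = ⊤ := by
  refine Ideal.eq_top_of_isUnit_mem _ ?_
    (IsLocalization.Away.algebraMap_isUnit (S := B) (sumSMulX a))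
  rw [sumSMulX, Finsupp.linearCombination_apply, Finsupp.sum, map_sum]
  refine Ideal.sum_mem _ fun i _ ↦ ?_
  rw [smul_eq_C_mul, map_mul, ← algebraMap_eq, ← IsScalarTower.algebraMap_apply]
  exact Ideal.mul_mem_right _ _ (Ideal.mem_map_of_mem _ (Ideal.subset_span ⟨i, rfl⟩))

lemma DetectsDvd.algebraMap_dvd_algebraMap_iff [Finite σ]
    (ha : DetectsDvd (Ideal.span (Set.range a)))
    {x y : R} : algebraMap R B y ∣ algebraMap R B x ↔ y ∣ x := by
  refine ⟨fun h ↦ ?_, map_dvd _⟩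
  rw [IsScalarTower.algebraMap_apply R (MvPolynomial σ R) B,
    IsScalarTower.algebraMap_apply R (MvPolynomial σ R) B,
    algebraMap_dvd_algebraMap_iff_exists_dvd_mul_pow (sumSMulX a)] at h
  obtain ⟨n, hn⟩ := h
  exact ha.dvd_of_C_dvd_C_mul_sumSMulX_pow hn

lemma isPrincipal_map_of_away_sumSMulX [IsDomain R] (ha0 : a ≠ 0) {I Q : Ideal R} {c : R}
    (hc : c ≠ 0) (hI : HasFiniteFreeResolution R I)
    (hIQ : I.map (algebraMap R B) * Q.map (algebraMap R B) = Ideal.span {algebraMap R B c}) :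
    (I.map (algebraMap R B)).IsPrincipal := by
  have hg0 : sumSMulX a ≠ 0 := by
    classical
    intro h
    exact ha0 (Finsupp.ext fun i ↦ by rw [← eval_single_sumSMulX a i, h]; simp)
  have hpow := powers_le_nonZeroDivisors_of_noZeroDivisors hg0
  have : IsDomain B := IsLocalization.isDomain_of_le_nonZeroDivisors B hpow
  have : Module.Flat (MvPolynomial σ R) B := IsLocalization.flat B (Submonoid.powers (sumSMulX a))
  have : Module.Flat R B := .trans R (MvPolynomial σ R) B
  have hinj : Function.Injective (algebraMap R B) := by
    rw [IsScalarTower.algebraMap_eq R (MvPolynomial σ R) B]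
    exact (IsLocalization.injective B hpow).comp (C_injective σ R)
  exact hI.isPrincipal_map ((map_ne_zero_iff _ hinj).2 hc) hIQ

lemma DetectsDvd.exists_map_eq_span_singleton [IsDomain R] [Finite σ] {I Q : Ideal R} {c : R}
    (ha : DetectsDvd (Ideal.span (Set.range a))) (ha0 : a ≠ 0) (hc : c ≠ 0)
    (hI : HasFiniteFreeResolution R I) (hIQ : I * Q = Ideal.span {c} * Ideal.span (Set.range a)) :
    ∃ l : R, I.map (algebraMap R B) = Ideal.span {algebraMap R B l} := by
  have halg := IsScalarTower.algebraMap_apply R (MvPolynomial σ R) B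
  have hIQB : I.map (algebraMap R B) * Q.map (algebraMap R B) = Ideal.span {algebraMap R B c} := by
    rw [← Ideal.map_mul, hIQ, Ideal.map_mul, map_span_range_eq_top_of_away_sumSMulX a,
      Ideal.mul_top, Ideal.map_span, Set.image_singleton]
  obtain ⟨h, hh⟩ := exists_eq_span_singleton_algebraMap_of_away (sumSMulX a)
    (isPrincipal_map_of_away_sumSMulX ha0 hc hI hIQB)
  have hdvd : algebraMap (MvPolynomial σ R) B h ∣ algebraMap (MvPolynomial σ R) B (C c) := by
    have hcI := hIQB.symm.le.trans Ideal.mul_le_left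
    rwa [hh, Ideal.span_singleton_le_span_singleton, halg] at hcI
  obtain ⟨n, hn⟩ := (algebraMap_dvd_algebraMap_iff_exists_dvd_mul_pow (sumSMulX a)).1 hdvd
  obtain ⟨l, j, rfl⟩ := ha.exists_eq_C_mul_sumSMulX_pow ha0 hc hn
  have hu := (IsLocalization.Away.algebraMap_isUnit (S := B) (sumSMulX a)).pow j
  exact ⟨l, by rw [hh, map_mul, map_pow, Ideal.span_singleton_mul_right_unit hu, halg]; rfl⟩

end SumSMulX

theorem dvd_of_dvd_mul_right_of_isRelPrime_of_hasFiniteFreeResolution {R : Type u} [CommRing R]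
    [IsDomain R] [IsNoetherianRing R] [IsIntegrallyClosed R] {c e x : R} (hc : c ≠ 0)
    (hI : HasFiniteFreeResolution R (Ideal.span {c, e})) (hce : IsRelPrime c e)
    (hx : c ∣ x * e) : c ∣ x := by
  obtain ⟨n, s, hs⟩ := Submodule.fg_iff_exists_fin_generating_family.1 (IsNoetherian.noetherian
    ((Ideal.span {c}).colon {e} ⊔ (Ideal.span {e}).colon {c}))
  let a : Fin n →₀ R := Finsupp.equivFunOnFinite.symm s
  have hJ : Ideal.span (Set.range a) = (Ideal.span {c}).colon {e} ⊔ (Ideal.span {e}).colon {c} := hs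
  have ha : DetectsDvd (Ideal.span (Set.range a)) := hJ ▸ detectsDvd_colon_sup_colon hc e
  have ha0 : a ≠ 0 := by
    intro ha0
    have hcJ : c ∈ Ideal.span (Set.range a) := hJ ▸ Ideal.mem_sup_left
      (mem_colon_span_singleton_iff_dvd.2 (dvd_mul_right c e))
    have hbot : Ideal.span (Set.range a) = ⊥ := Ideal.span_eq_bot.2 (by simp [ha0])
    exact hc (by simpa [hbot] using hcJ)
  let B := Localization.Away (MvPolynomial.sumSMulX a)
  obtain ⟨l, hl⟩ := ha.exists_map_eq_span_singleton (B := B) ha0 hc hI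
    (hJ ▸ span_pair_mul_colon c e)
  have hdvd {r : R} (hr : r ∈ Ideal.span {c, e}) : l ∣ r :=
    ha.algebraMap_dvd_algebraMap_iff (B := B).1
      (Ideal.mem_span_singleton.1 (hl ▸ Ideal.mem_map_of_mem _ hr))
  have hlu : IsUnit l :=
    hce (hdvd (Ideal.subset_span (by simp))) (hdvd (Ideal.subset_span (by simp)))
  have hle : Ideal.span {x} * Ideal.span {c, e} ≤ Ideal.span {c} := by
    rw [Ideal.span_singleton_mul_le_iff]
    intro r hr
    obtain ⟨u, v, rfl⟩ := Ideal.mem_span_pair.1 hr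
    rw [Ideal.mem_span_singleton, mul_add, mul_left_comm x v e]
    exact dvd_add ⟨x * u, by ring⟩ (hx.mul_left v)
  have := Ideal.map_mono (f := algebraMap R B) hle
  rw [Ideal.map_mul, hl, Ideal.span_singleton_eq_top.2 (hlu.map (algebraMap R B)), Ideal.mul_top,
    Ideal.map_span, Ideal.map_span, Set.image_singleton, Set.image_singleton,
    Ideal.span_singleton_le_span_singleton, ha.algebraMap_dvd_algebraMap_iff] at this
  exact this

theorem uniqueFactorizationMonoid_of_isRegularLocalRing (R : Type u) [CommRing R]
    [IsRegularLocalRing R] [IsIntegrallyClosed R] : UniqueFactorizationMonoid R := by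
  have := isDomain_of_isRegularLocalRing R
  refine ⟨fun {c} ↦ ⟨fun hirr ↦ ⟨hirr.ne_zero, hirr.not_isUnit, fun x e hxe ↦ ?_⟩,
    Prime.irreducible⟩⟩
  refine or_iff_not_imp_right.2 fun hce ↦ ?_
  exact dvd_of_dvd_mul_right_of_isRelPrime_of_hasFiniteFreeResolution hirr.ne_zero
    (hasFiniteFreeResolution_of_isRegularLocalRing R _) (hirr.isRelPrime_iff_not_dvd.2 hce) hxe

lemma isRegularLocalRing_of_span_eq_maximalIdeal {R : Type*} [CommRing R] [IsLocalRing R]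
    [IsNoetherianRing R] {s : Finset R}
    (hs : Ideal.span (s : Set R) = IsLocalRing.maximalIdeal R) (hcard : s.card = ringKrullDim R) :
    IsRegularLocalRing R := by
  refine .of_spanFinrank_maximalIdeal_le R ?_
  have := Submodule.spanFinrank_span_le_ncard_of_finite (R := R) s.finite_toSet
  rw [Ideal.submodule_span_eq, hs, Set.ncard_coe_finset] at this
  exact hcard ▸ mod_cast this

end UniqueFactorization

open Polynomial

section LocalAlgebra

open IsLocalRing

lemma isUnit_two_of_odd_of_natCast_mem_maximalIdeal {V : Type*} [CommRing V] [IsLocalRing V]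
    {p : ℕ} (hp : Odd p) (hpV : (p : V) ∈ maximalIdeal V) : IsUnit (2 : V) := by
  by_contra h2
  obtain ⟨k, rfl⟩ := hp
  rw [Nat.cast_add, Nat.cast_mul, Nat.cast_two, Nat.cast_one] at hpV
  exact (mem_maximalIdeal _).1 (((maximalIdeal V).add_mem_iff_right
    (Ideal.mul_mem_right _ _ h2)).1 hpV) isUnit_one

lemma map_maximalIdeal_le_of_isMaximal {V E : Type*} [CommRing V] [IsLocalRing V] [CommRing E]
    [Algebra V E] [Algebra.IsIntegral V E] (P : Ideal E) [P.IsMaximal] :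
    (maximalIdeal V).map (algebraMap V E) ≤ P := by
  rw [Ideal.map_le_iff_le_comap,
    eq_maximalIdeal (Ideal.isMaximal_comap_of_isIntegral_of_isMaximal (R := V) P)]

lemma isUnit_algebraMap_add_of_mem_radical {V E : Type*} [CommRing V] [IsLocalRing V] [CommRing E]
    [Algebra V E] [Algebra.IsIntegral V E] {s : V} (hs : IsUnit s) {y : E}
    (hy : y ∈ ((maximalIdeal V).map (algebraMap V E)).radical) :
    IsUnit (algebraMap V E s + y) := by
  by_contra hn
  obtain ⟨P, hP, hmem⟩ := exists_max_ideal_of_mem_nonunits hn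
  have hyP : y ∈ P := hP.isPrime.radical_le_iff.2 (map_maximalIdeal_le_of_isMaximal P) hy
  exact hP.ne_top (P.eq_top_of_isUnit_mem ((P.add_mem_iff_left hyP).1 hmem) (hs.map _))

lemma exists_isLocalRing_maximalIdeal_eq {V E : Type*} [CommRing V] [IsLocalRing V] [CommRing E]
    [Nontrivial E] [Algebra V E] [Algebra.IsIntegral V E] {M : Ideal E}
    (hle : (maximalIdeal V).map (algebraMap V E) ≤ M)
    (hrad : M ≤ ((maximalIdeal V).map (algebraMap V E)).radical)
    (hres : ∀ x : E, ∃ s : V, x - algebraMap V E s ∈ M) :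
    ∃ _ : IsLocalRing E, maximalIdeal E = M := by
  have hMmax : ∀ P : Ideal E, P.IsMaximal → P = M := by
    intro P hP
    have hMP : M ≤ P :=
      hrad.trans (hP.isPrime.radical_le_iff.2 (map_maximalIdeal_le_of_isMaximal P))
    refine le_antisymm (fun x hx ↦ ?_) hMP
    obtain ⟨s, hs⟩ := hres x
    have hsP : algebraMap V E s ∈ P := by simpa using P.sub_mem hx (hMP hs)
    have hsV : s ∈ maximalIdeal V := fun hu ↦
      hP.ne_top (P.eq_top_of_isUnit_mem hsP (hu.map _))
    simpa using M.add_mem hs (hle (Ideal.mem_map_of_mem _ hsV))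
  obtain ⟨P, hP⟩ := Ideal.exists_maximal E
  have hloc : IsLocalRing E := .of_unique_max_ideal ⟨M, hMmax P hP ▸ hP, hMmax⟩
  exact ⟨hloc, hMmax _ inferInstance⟩

lemma mul_eq_zero_of_isNilpotent_of_mul_eq {C : Type*} [CommRing C] {y e r : C}
    (hy : IsNilpotent y) (he : IsIdempotentElem e) (hye : y * e = r * e)
    (hr : r = 0 ∨ IsUnit r) : y * e = 0 := by
  obtain rfl | hr := hr
  · rw [hye, zero_mul]
  obtain ⟨n, hn⟩ := hy
  have hpow : r ^ (n + 1) * e = 0 := by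
    rw [← he.pow_succ_eq n, ← mul_pow, ← hye, mul_pow, pow_succ y, hn, zero_mul, zero_mul]
  rw [(hr.pow (n + 1)).mul_right_eq_zero.1 hpow, mul_zero]

lemma mem_range_of_pow_mul_mem_range {D K : Type*} [CommRing D] [Field K] [Algebra D K]
    (hinj : Function.Injective (algebraMap D K)) {π : D} (hπ : π ≠ 0)
    (hrad : (Ideal.span {π}).IsRadical) {x : K} (hx : IsIntegral D x) {n : ℕ}
    (hn : algebraMap D K (π ^ n) * x ∈ (algebraMap D K).range) :
    x ∈ (algebraMap D K).range := by
  have hπK : algebraMap D K π ≠ 0 := (map_ne_zero_iff _ hinj).2 hπ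
  have hone : ∀ y : K, IsIntegral D y → algebraMap D K π * y ∈ (algebraMap D K).range →
      y ∈ (algebraMap D K).range := by
    rintro y ⟨f, hf, hfy⟩ ⟨d, hd⟩
    have hroot : (f.scaleRoots π).IsRoot d := by
      rw [IsRoot.def, ← map_eq_zero_iff _ hinj, ← aeval_algebraMap_apply_eq_algebraMap_eval, hd]
      exact scaleRoots_aeval_eq_zero hfy
    have hmem : d ^ (f.scaleRoots π).natDegree ∈ Ideal.span {π} :=
      scaleRoots.isWeaklyEisensteinAt f (Ideal.mem_span_singleton_self π)
        |>.pow_natDegree_le_of_root_of_monic_mem hroot ((monic_scaleRoots_iff π).2 hf) _ le_rfl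
    obtain ⟨d', rfl⟩ := Ideal.mem_span_singleton.1 (hrad ⟨_, hmem⟩)
    exact ⟨d', mul_left_cancel₀ hπK (by rw [← hd, map_mul])⟩
  induction n with
  | zero => simpa using hn
  | succ n ih =>
    refine ih (hone _ (isIntegral_algebraMap.mul hx) ?_)
    rwa [← mul_assoc, ← map_mul, ← pow_succ']

end LocalAlgebra

section QuadraticExtension

open IsLocalRing

variable {E D : Type*} [CommRing E] [IsLocalRing E] [CommRing D] [Algebra E D] {u ψ β γ : E}
  {t : D} {q : ℕ}

lemma exists_sq_eq_one_isUnit_sub (h2 : IsUnit (2 : E)) (hβ : IsUnit β) :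
    ∃ l : E, l ^ 2 = 1 ∧ IsUnit (β - l * γ) := by
  have hsum : IsUnit ((β - 1 * γ) + (β - -1 * γ)) := by
    convert h2.mul hβ using 1; ring
  obtain h | h := isUnit_or_isUnit_of_isUnit_add hsum
  · exact ⟨1, by ring, h⟩
  · exact ⟨-1, by ring, h⟩

lemma exists_map_maximalIdeal_eq_span_singleton (hm : maximalIdeal E = Ideal.span {u, ψ})
    (h2 : IsUnit (2 : E)) (hβ : IsUnit β)
    (hut : algebraMap E D u * t = algebraMap E D (ψ ^ (q + 2)))
    (hψt : algebraMap E D ψ * t = algebraMap E D (β * ψ + γ * u)) :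
    ∃ l : E, (maximalIdeal E).map (algebraMap E D) =
      Ideal.span {algebraMap E D (u + l * ψ)} := by
  obtain ⟨l, hl, hunit⟩ := exists_sq_eq_one_isUnit_sub (γ := γ) h2 hβ
  refine ⟨l, le_antisymm ?_ ?_⟩
  · have hψm : ψ ∈ maximalIdeal E := hm ▸ Ideal.subset_span (by simp)
    have hlunit : IsUnit (l * (β - l * γ) + ψ ^ (q + 1)) := by
      have hl' : IsUnit l := .of_mul_eq_one l (by rw [← sq, hl])
      have hsum : IsUnit (l * (β - l * γ) + ψ ^ (q + 1) + -ψ ^ (q + 1)) := by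
        simpa using hl'.mul hunit
      exact (isUnit_or_isUnit_of_isUnit_add hsum).resolve_right
        (neg_mem (Ideal.pow_mem_of_mem _ hψm _ q.succ_pos))
    have hprod : algebraMap E D (u + l * ψ) * (t - algebraMap E D (l * γ)) =
        algebraMap E D ψ * algebraMap E D (l * (β - l * γ) + ψ ^ (q + 1)) := by
      simp only [map_add, map_sub, map_mul, map_pow] at hut hψt ⊢
      linear_combination hut + algebraMap E D l * hψt
    have hψ : algebraMap E D ψ ∈ Ideal.span {algebraMap E D (u + l * ψ)} := by
      rw [Ideal.mem_span_singleton, ← (hlunit.map (algebraMap E D)).dvd_mul_right, ← hprod]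
      exact dvd_mul_right _ _
    have hu : algebraMap E D u ∈ Ideal.span {algebraMap E D (u + l * ψ)} := by
      have := Ideal.sub_mem _ (Ideal.mem_span_singleton_self (algebraMap E D (u + l * ψ)))
        (Ideal.mul_mem_left _ (algebraMap E D l) hψ)
      simpa using this
    rw [hm, Ideal.map_span, Ideal.span_le, Set.image_pair, Set.pair_subset_iff]
    exact ⟨hu, hψ⟩
  · rw [Ideal.span_singleton_le_iff_mem, hm]
    exact Ideal.mem_map_of_mem _ (add_mem (Ideal.subset_span (by simp))
      (Ideal.mul_mem_left _ _ (Ideal.subset_span (by simp))))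

lemma isRadical_map_maximalIdeal (hβ : IsUnit β) (hgen : ∀ y : D, ∃ a b : E,
      y = algebraMap E D a + algebraMap E D b * t)
    (ht : t ^ 2 - algebraMap E D β * t ∈ (maximalIdeal E).map (algebraMap E D)) :
    ((maximalIdeal E).map (algebraMap E D)).IsRadical := by
  set I := (maximalIdeal E).map (algebraMap E D)
  have hzero_or_unit : ∀ r : E, algebraMap E (D ⧸ I) r = 0 ∨ IsUnit (algebraMap E (D ⧸ I) r) := by
    intro r
    by_cases hr : IsUnit r
    · exact .inr (hr.map _)
    · exact .inl (Ideal.Quotient.eq_zero_iff_mem.2 (Ideal.mem_map_of_mem _ hr))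
  obtain ⟨β', hβ'⟩ := hβ.exists_left_inv
  have hβD : algebraMap E (D ⧸ I) β' * algebraMap E (D ⧸ I) β = 1 := by
    rw [← map_mul, hβ', map_one]
  set e : D ⧸ I := algebraMap E (D ⧸ I) β' * Ideal.Quotient.mk I t
  have ht' : Ideal.Quotient.mk I t = algebraMap E (D ⧸ I) β * e := by
    linear_combination -Ideal.Quotient.mk I t * hβD
  have hidem : IsIdempotentElem e := by
    have hquad : Ideal.Quotient.mk I t ^ 2 - algebraMap E (D ⧸ I) β * Ideal.Quotient.mk I t = 0 :=
      Ideal.Quotient.eq_zero_iff_mem.2 ht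
    rw [IsIdempotentElem]
    linear_combination algebraMap E (D ⧸ I) β' ^ 2 * hquad + e * hβD
  intro y hy
  obtain ⟨n, hn⟩ := hy
  obtain ⟨a, b, rfl⟩ := hgen y
  have hmk : Ideal.Quotient.mk I (algebraMap E D a + algebraMap E D b * t) =
      algebraMap E (D ⧸ I) a + algebraMap E (D ⧸ I) (b * β) * e := by
    rw [map_add, map_mul, ht', map_mul, mul_assoc]; rfl
  have hnil : IsNilpotent (Ideal.Quotient.mk I (algebraMap E D a + algebraMap E D b * t)) :=
    ⟨n, by rw [← map_pow, Ideal.Quotient.eq_zero_iff_mem.2 hn]⟩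
  have h₁ := mul_eq_zero_of_isNilpotent_of_mul_eq hnil hidem (r := algebraMap E _ (a + b * β))
    (by rw [hmk, map_add]; linear_combination algebraMap E (D ⧸ I) (b * β) * hidem.eq)
    (hzero_or_unit _)
  have h₂ := mul_eq_zero_of_isNilpotent_of_mul_eq hnil hidem.one_sub (r := algebraMap E _ a)
    (by rw [hmk]; linear_combination -algebraMap E (D ⧸ I) (b * β) * hidem.eq)
    (hzero_or_unit _)
  exact Ideal.Quotient.eq_zero_iff_mem.1 (by linear_combination h₁ + h₂)

lemma exists_eq_add_mul_of_mem_adjoin {A B : Type*} [CommRing A] [CommRing B] [Algebra A B]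
    {r s : A} {t y : B} (ht : t ^ 2 = algebraMap A B r * t + algebraMap A B s)
    (hy : y ∈ Algebra.adjoin A {t}) : ∃ a b : A, y = algebraMap A B a + algebraMap A B b * t := by
  induction hy using Algebra.adjoin_induction with
  | mem y hy => exact ⟨0, 1, by simpa using hy⟩
  | algebraMap a => exact ⟨a, 0, by simp⟩
  | add y y' _ _ hy hy' =>
    obtain ⟨a, b, rfl⟩ := hy
    obtain ⟨a', b', rfl⟩ := hy'
    exact ⟨a + a', b + b', by simp only [map_add]; ring⟩
  | mul y y' _ _ hy hy' =>
    obtain ⟨a, b, rfl⟩ := hy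
    obtain ⟨a', b', rfl⟩ := hy'
    refine ⟨a * a' + b * b' * s, a * b' + b * a' + b * b' * r, ?_⟩
    simp only [map_add, map_mul]
    linear_combination algebraMap A B b * algebraMap A B b' * ht

lemma exists_isRadical_span_singleton_dvd (hm : maximalIdeal E = Ideal.span {u, ψ})
    (h2 : IsUnit (2 : E)) (hβ : IsUnit β) (hgen : ∀ y : D, ∃ a b : E,
      y = algebraMap E D a + algebraMap E D b * t)
    (hψ : ψ ^ (q + 3) = u * (β * ψ + γ * u))
    (hut : algebraMap E D u * t = algebraMap E D (ψ ^ (q + 2)))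
    (hψt : algebraMap E D ψ * t = algebraMap E D (β * ψ + γ * u))
    (ht : t ^ 2 = algebraMap E D β * t + algebraMap E D (γ * ψ ^ (q + 1))) :
    ∃ π : D, (Ideal.span {π}).IsRadical ∧ π ∣ algebraMap E D u ∧
      algebraMap E D u ∣ π ^ (q + 3) := by
  obtain ⟨l, hspan⟩ := exists_map_maximalIdeal_eq_span_singleton hm h2 hβ hut hψt
  have hum : u ∈ maximalIdeal E := hm ▸ Ideal.subset_span (by simp)
  have hψm : ψ ∈ maximalIdeal E := hm ▸ Ideal.subset_span (by simp)
  refine ⟨algebraMap E D (u + l * ψ), ?_, ?_, ?_⟩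
  · rw [← hspan]
    refine isRadical_map_maximalIdeal hβ hgen ?_
    rw [ht, add_sub_cancel_left]
    exact Ideal.mem_map_of_mem _
      (Ideal.mul_mem_left _ _ (Ideal.pow_mem_of_mem _ hψm _ q.succ_pos))
  · rw [← Ideal.mem_span_singleton, ← hspan]
    exact Ideal.mem_map_of_mem _ hum
  · have hdvd := sub_dvd_pow_sub_pow (u + l * ψ) (l * ψ) (q + 3)
    rw [add_sub_cancel_right, mul_pow, hψ] at hdvd
    rw [← map_pow]
    exact map_dvd _ ((dvd_sub_left ((dvd_mul_right _ _).mul_left _)).1 hdvd)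

lemma exists_eq_add_mul_of_isIntegral {K : Type*} [Field K] [Algebra E K] [FaithfulSMul E K]
    (hm : maximalIdeal E = Ideal.span {u, ψ}) (h2 : IsUnit (2 : E)) (hβ : IsUnit β) (hu : u ≠ 0)
    (hψ : ψ ^ (q + 3) = u * (β * ψ + γ * u)) {t x : K}
    (hut : algebraMap E K u * t = algebraMap E K (ψ ^ (q + 2))) (hx : IsIntegral E x) {n : ℕ}
    (hn : algebraMap E K (u ^ n) * x ∈ (algebraMap E K).range) :
    ∃ a b : E, x = algebraMap E K a + algebraMap E K b * t := by
  have huK : algebraMap E K u ≠ 0 := by simpa using hu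
  have hψt : algebraMap E K ψ * t = algebraMap E K (β * ψ + γ * u) := by
    refine mul_left_cancel₀ huK ?_
    rw [← map_mul, ← hψ, pow_succ', map_mul, ← hut]
    ring
  have ht : t ^ 2 = algebraMap E K β * t + algebraMap E K (γ * ψ ^ (q + 1)) := by
    refine mul_left_cancel₀ huK ?_
    simp only [map_mul, map_pow, map_add] at hut hψt ⊢
    linear_combination (t - algebraMap E K β) * hut + algebraMap E K ψ ^ (q + 1) * hψt
  set D := Algebra.adjoin E {t}
  obtain ⟨π, hrad, hπu, huπ⟩ := exists_isRadical_span_singleton_dvd (D := D)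
    (t := ⟨t, Algebra.self_mem_adjoin_singleton E t⟩) hm h2 hβ
    (fun y ↦ (exists_eq_add_mul_of_mem_adjoin ht y.2).imp fun _ ↦ Exists.imp fun _ ↦ Subtype.ext)
    hψ (Subtype.ext hut) (Subtype.ext hψt) (Subtype.ext ht)
  have hπ : π ≠ 0 := by
    rintro rfl
    exact huK (congrArg Subtype.val (zero_dvd_iff.1 hπu))
  obtain ⟨w, hw⟩ := pow_dvd_pow_of_dvd huπ n
  obtain ⟨y, hy⟩ := hn
  obtain ⟨y', rfl⟩ : x ∈ (algebraMap D K).range := by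
    refine mem_range_of_pow_mul_mem_range Subtype.val_injective hπ hrad (hx.tower_top (A := D))
      (n := (q + 3) * n) ⟨w * algebraMap E D y, ?_⟩
    rw [pow_mul, hw, ← map_pow, map_mul, map_mul, ← IsScalarTower.algebraMap_apply,
      ← IsScalarTower.algebraMap_apply, hy]
    ring
  exact exists_eq_add_mul_of_mem_adjoin ht y'.2

end QuadraticExtension

section WeightFiltration

variable (S : Type*) {K : Type*} [CommRing S] [Field K] [Algebra S K] (p : ℕ) (u v : K)

/-- The monomials `pˡuⁱvʲ`, with `l` possibly negative, of weight `i + j + pl ≥ n`: the elements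
`u` and `v` have weight `1`, and `p` has weight `p`. -/
def weightMonomials (n : ℤ) : Set K :=
  {x | ∃ (l : ℤ) (i j : ℕ), n ≤ i + j + p * l ∧ x = (p : K) ^ l * u ^ i * v ^ j}

/-- The filtration of `K` by weight. Its part of weight `0` is the ring `S[u, v, ηᵢ]`. -/
def weightFiltration (n : ℤ) : Submodule S K :=
  Submodule.span S (weightMonomials p u v n)

variable {S p u v} {m n : ℤ} {x y : K}

lemma zpow_mul_pow_mul_pow_mem_weightFiltration {l : ℤ} {i j : ℕ} (h : n ≤ i + j + p * l) :
    (p : K) ^ l * u ^ i * v ^ j ∈ weightFiltration S p u v n :=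
  Submodule.subset_span ⟨l, i, j, h, rfl⟩

lemma weightFiltration_antitone : Antitone (weightFiltration S p u v) := fun _ _ h ↦
  Submodule.span_mono fun _ ⟨l, i, j, hn, hx⟩ ↦ ⟨l, i, j, h.trans hn, hx⟩

lemma algebraMap_mul_mem_weightFiltration (s : S) (hx : x ∈ weightFiltration S p u v n) :
    algebraMap S K s * x ∈ weightFiltration S p u v n := by
  rw [← Algebra.smul_def]
  exact Submodule.smul_mem _ _ hx

lemma natCast_zpow_mem_weightFiltration (l : ℤ) :
    (p : K) ^ l ∈ weightFiltration S p u v (p * l) := by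
  simpa using zpow_mul_pow_mul_pow_mem_weightFiltration (S := S) (u := u) (v := v)
    (n := p * l) (l := l) (i := 0) (j := 0) (by simp)

lemma left_mem_weightFiltration : u ∈ weightFiltration S p u v 1 := by
  simpa using zpow_mul_pow_mul_pow_mem_weightFiltration (S := S) (p := p) (u := u) (v := v)
    (n := 1) (l := 0) (i := 1) (j := 0) (by simp)

lemma right_mem_weightFiltration : v ∈ weightFiltration S p u v 1 := by
  simpa using zpow_mul_pow_mul_pow_mem_weightFiltration (S := S) (p := p) (u := u) (v := v)
    (n := 1) (l := 0) (i := 0) (j := 1) (by simp)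

lemma algebraMap_mem_weightFiltration (s : S) : algebraMap S K s ∈ weightFiltration S p u v 0 := by
  simpa using algebraMap_mul_mem_weightFiltration s
    (natCast_zpow_mem_weightFiltration (S := S) (p := p) (u := u) (v := v) 0)

variable [NeZero (p : K)]

lemma mul_mem_weightFiltration (hx : x ∈ weightFiltration S p u v m)
    (hy : y ∈ weightFiltration S p u v n) : x * y ∈ weightFiltration S p u v (m + n) := by
  have hxy := Submodule.mul_mem_mul hx hy
  rw [weightFiltration, weightFiltration, Submodule.span_mul_span] at hxy
  refine Submodule.span_mono ?_ hxy
  rintro _ ⟨_, ⟨l, i, j, h, rfl⟩, _, ⟨l', i', j', h', rfl⟩, rfl⟩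
  refine ⟨l + l', i + i', j + j', by push_cast; linarith, ?_⟩
  rw [zpow_add₀ (NeZero.ne _)]
  ring

lemma pow_mem_weightFiltration (hx : x ∈ weightFiltration S p u v n) (k : ℕ) :
    x ^ k ∈ weightFiltration S p u v (k * n) := by
  induction k with
  | zero => simpa using algebraMap_mem_weightFiltration (S := S) (p := p) (u := u) (v := v) 1
  | succ k ih =>
    rw [pow_succ, Nat.cast_succ, add_mul, one_mul]
    exact mul_mem_weightFiltration ih hx

variable (S p u v) in
/-- The part of weight `0` of the weight filtration, as a subalgebra. -/
def weightSubalgebra : Subalgebra S K where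
  __ := weightFiltration S p u v 0
  mul_mem' hx hy := by simpa using mul_mem_weightFiltration hx hy
  algebraMap_mem' := algebraMap_mem_weightFiltration

lemma mem_weightSubalgebra : x ∈ weightSubalgebra S p u v ↔ x ∈ weightFiltration S p u v 0 :=
  Iff.rfl

lemma mem_weightSubalgebra_of_le (hn : 0 ≤ n) (hx : x ∈ weightFiltration S p u v n) :
    x ∈ weightSubalgebra S p u v :=
  weightFiltration_antitone hn hx

lemma left_mem_weightSubalgebra : u ∈ weightSubalgebra S p u v :=
  mem_weightSubalgebra_of_le one_pos.le left_mem_weightFiltration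

lemma right_mem_weightSubalgebra : v ∈ weightSubalgebra S p u v :=
  mem_weightSubalgebra_of_le one_pos.le right_mem_weightFiltration

end WeightFiltration

section RadicalRelation

variable {S K : Type*} [CommRing S] [Field K] [Algebra S K] {p : ℕ} {u v : K} {F G : S[X]}

lemma aeval_mem_subalgebra {A : Subalgebra S K} {x : K} (hx : x ∈ A) (F : S[X]) : aeval x F ∈ A :=
  Algebra.adjoin_singleton_le hx (aeval_mem_adjoin_singleton S x)

lemma exists_monic_aeval_eq_zero (hF : F.natDegree < p) (hu : u ^ p = p * aeval u F) :
    ∃ P : S[X], P.Monic ∧ P.natDegree = p ∧ aeval u P = 0 := by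
  have := (algebraMap S K).domain_nontrivial
  have hdeg : (C (p : S) * F).degree < p :=
    degree_le_natDegree.trans_lt (Nat.cast_lt.2 ((natDegree_C_mul_le _ _).trans_lt hF))
  refine ⟨X ^ p - C (p : S) * F, monic_X_pow_sub hdeg, ?_, by simp [hu]⟩
  rw [natDegree_sub_eq_left_of_natDegree_lt] <;> rw [natDegree_X_pow]
  exact (natDegree_C_mul_le _ _).trans_lt hF

lemma isIntegral_of_pow_eq_natCast_mul_aeval (hF : F.natDegree < p) (hu : u ^ p = p * aeval u F) :
    IsIntegral S u :=
  have ⟨P, hP, _, hPu⟩ := exists_monic_aeval_eq_zero hF hu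
  ⟨P, hP, hPu⟩

lemma isIntegral_of_mem_weightFiltration [NeZero (p : K)] (hF : F.natDegree < p)
    (hu : u ^ p = p * aeval u F) (hG : G.natDegree < p) (hv : v ^ p = p * aeval v G) {x : K}
    (hx : x ∈ weightFiltration S p u v 0) : IsIntegral S x := by
  have hui := isIntegral_of_pow_eq_natCast_mul_aeval hF hu
  have hvi := isIntegral_of_pow_eq_natCast_mul_aeval hG hv
  refine Submodule.span_le (p := (integralClosure S K).toSubmodule).2 ?_ hx
  rintro _ ⟨l, i, j, h, rfl⟩
  obtain ⟨k, hk⟩ := Int.eq_ofNat_of_zero_le h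
  refine IsIntegral.of_pow (n := p) (by omega) ?_
  have hpow : ((p : K) ^ l * u ^ i * v ^ j) ^ p =
      (p : K) ^ k * aeval u F ^ i * aeval v G ^ j := by
    have hpK : (p : K) ≠ 0 := NeZero.ne _
    calc ((p : K) ^ l * u ^ i * v ^ j) ^ p = (p : K) ^ (p * l) * (u ^ p) ^ i * (v ^ p) ^ j := by
          rw [mul_comm (p : ℤ) l, zpow_mul, zpow_natCast]; ring
      _ = (p : K) ^ (i + j + p * l : ℤ) * aeval u F ^ i * aeval v G ^ j := by
          rw [hu, hv, zpow_add₀ hpK, zpow_add₀ hpK, zpow_natCast, zpow_natCast]; ring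
      _ = _ := by rw [hk]; simp
  rw [hpow]
  have hp := isIntegral_algebraMap (R := S) (A := K) (x := (p : S))
  rw [map_natCast] at hp
  have hFi : IsIntegral S (aeval u F) := aeval_mem_subalgebra (A := integralClosure S K) hui F
  have hGi : IsIntegral S (aeval v G) := aeval_mem_subalgebra (A := integralClosure S K) hvi G
  exact ((hp.pow k).mul (hFi.pow i)).mul (hGi.pow j)

end RadicalRelation

section WeightSubalgebraOverLocalRing

open IsLocalRing

variable {V K : Type*} [CommRing V] [Field K] [Algebra V K] {p : ℕ} [NeZero (p : K)] {u v : K}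

lemma aeval_eq_coeff_zero_add {A : Type*} [CommRing A] [Algebra V A] (x : A) (F : V[X]) :
    aeval x F = algebraMap V A (F.coeff 0) + x * aeval x F.divX := by
  conv_lhs => rw [← F.divX_mul_X_add]
  simp only [map_add, map_mul, aeval_X, aeval_C]
  ring

section Unit

variable {N : (weightSubalgebra V p u v)ˣ}

lemma coe_unit_zpow {A : Subalgebra V K} (N : Aˣ) (l : ℤ) :
    ((↑(N ^ l) : A) : K) = ((N : A) : K) ^ l :=
  (congrArg Units.val (map_zpow (Units.map (A.val : A →* K)) N l)).trans
    (Units.val_zpow_eq_zpow_val _ _)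

lemma natCast_zpow_eq_zpow_mul (hu : u ^ p = p * (N : weightSubalgebra V p u v)) (l : ℤ) :
    (p : K) ^ l = u ^ (p * l) * (↑(N ^ (-l)) : weightSubalgebra V p u v) := by
  have hN : ((N : weightSubalgebra V p u v) : K) ≠ 0 :=
    (N.isUnit.map (weightSubalgebra V p u v).val).ne_zero
  rw [coe_unit_zpow, zpow_mul, zpow_natCast, hu, mul_zpow, mul_assoc, ← zpow_add₀ hN,
    add_neg_cancel, zpow_zero, mul_one]

lemma inv_mem_weightFiltration_neg_one (hp : p ≠ 0) (hu0 : u ≠ 0)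
    (hu : u ^ p = p * (N : weightSubalgebra V p u v)) : u⁻¹ ∈ weightFiltration V p u v (-1) := by
  have hinv : u⁻¹ = (p : K) ^ (-1 : ℤ) * u ^ (p - 1) * (↑(N⁻¹) : weightSubalgebra V p u v) := by
    have hN : ((↑(N⁻¹) : weightSubalgebra V p u v) : K) ≠ 0 :=
      (N⁻¹.isUnit.map (weightSubalgebra V p u v).val).ne_zero
    have hp1 := natCast_zpow_eq_zpow_mul hu 1
    rw [zpow_one, mul_one, zpow_natCast, zpow_neg_one] at hp1
    rw [zpow_neg_one, hp1, mul_inv, mul_right_comm, inv_mul_cancel_right₀ hN,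
      ← pow_sub_one_mul hp u, mul_inv_rev, inv_mul_cancel_right₀ (pow_ne_zero _ hu0)]
  rw [hinv]
  have hpu : (p : K) ^ (-1 : ℤ) * u ^ (p - 1) ∈ weightFiltration V p u v (-1) := by
    refine weightFiltration_antitone ?_ (mul_mem_weightFiltration
      (natCast_zpow_mem_weightFiltration (-1))
      (pow_mem_weightFiltration left_mem_weightFiltration _))
    rw [Nat.cast_sub (Nat.one_le_iff_ne_zero.2 hp)]
    simp
  simpa using mul_mem_weightFiltration hpu (SetLike.coe_mem (↑(N⁻¹) : weightSubalgebra V p u v))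

lemma exists_eq_pow_mul_of_mem_weightFiltration (hp : p ≠ 0) (hu0 : u ≠ 0)
    (hu : u ^ p = p * (N : weightSubalgebra V p u v)) {n : ℕ} {x : K}
    (hx : x ∈ weightFiltration V p u v n) : ∃ y : weightSubalgebra V p u v, x = u ^ n * y := by
  have hy := mul_mem_weightFiltration
    (pow_mem_weightFiltration (inv_mem_weightFiltration_neg_one hp hu0 hu) n) hx
  rw [mul_neg_one, neg_add_cancel] at hy
  exact ⟨⟨u⁻¹ ^ n * x, hy⟩, by simp [mul_inv_cancel_left₀ (pow_ne_zero n hu0)]⟩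

lemma subalgebra_eq_top_of_mem (hu0 : u ≠ 0) (hu : u ^ p = p * (N : weightSubalgebra V p u v))
    {θ : weightSubalgebra V p u v} (hθ : v = u * θ) {B : Subalgebra V (weightSubalgebra V p u v)}
    (huB : ⟨u, left_mem_weightSubalgebra⟩ ∈ B) (hNB : (N : weightSubalgebra V p u v) ∈ B)
    (hNB' : (↑(N⁻¹) : weightSubalgebra V p u v) ∈ B) (hθB : θ ∈ B) : B = ⊤ := by
  have hzpow : ∀ l : ℤ, (↑(N ^ l) : weightSubalgebra V p u v) ∈ B := by
    rintro (l | l)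
    · simpa using pow_mem hNB l
    · simpa [zpow_negSucc, ← inv_pow] using pow_mem hNB' (l + 1)
  suffices h : weightFiltration V p u v 0 ≤ (B.map (weightSubalgebra V p u v).val).toSubmodule by
    refine eq_top_iff.2 fun x _ ↦ ?_
    obtain ⟨y, hy, hyx⟩ := h x.2
    rwa [Subtype.ext hyx] at hy
  refine Submodule.span_le.2 ?_
  rintro _ ⟨l, i, j, h, rfl⟩
  obtain ⟨k, hk⟩ := Int.eq_ofNat_of_zero_le h
  refine ⟨⟨u, left_mem_weightSubalgebra⟩ ^ k * ↑(N ^ (-l)) * θ ^ j,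
    mul_mem (mul_mem (pow_mem huB k) (hzpow _)) (pow_mem hθB j), ?_⟩
  have hl : (k : ℤ) = i + j + p * l := hk.symm
  change u ^ k * (↑(N ^ (-l)) : weightSubalgebra V p u v) * (θ : K) ^ j =
    (p : K) ^ l * u ^ i * v ^ j
  have hvj : v ^ j = u ^ j * (θ : K) ^ j := (congrArg (· ^ j) hθ).trans (mul_pow _ _ _)
  rw [natCast_zpow_eq_zpow_mul hu, hvj, ← zpow_natCast u k, hl, zpow_add₀ hu0, zpow_add₀ hu0,
    zpow_natCast, zpow_natCast]
  ring

lemma exists_sub_algebraMap_mem (hu0 : u ≠ 0) (hu : u ^ p = p * (N : weightSubalgebra V p u v))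
    {θ : weightSubalgebra V p u v} (hθ : v = u * θ) {M : Ideal (weightSubalgebra V p u v)}
    (huM : ⟨u, left_mem_weightSubalgebra⟩ ∈ M) {a d : V} (ha : IsUnit a)
    (hN : (N : weightSubalgebra V p u v) - algebraMap V _ a ∈ M) (hd : θ - algebraMap V _ d ∈ M)
    (x : weightSubalgebra V p u v) : ∃ s : V, x - algebraMap V _ s ∈ M := by
  let E := weightSubalgebra V p u v
  let B : Subalgebra V E := (⊥ : Subalgebra V (E ⧸ M)).comap (Ideal.Quotient.mkₐ V M)
  have hB : ∀ y : E, y ∈ B ↔ ∃ s : V, y - algebraMap V E s ∈ M := by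
    intro y
    rw [Subalgebra.mem_comap, Algebra.mem_bot]
    refine exists_congr fun s ↦ ?_
    rw [← Ideal.Quotient.mk_eq_mk_iff_sub_mem]
    exact eq_comm
  have huB : (⟨u, left_mem_weightSubalgebra⟩ : E) ∈ B := (hB _).2 ⟨0, by simpa using huM⟩
  have hNB : (N : E) ∈ B := (hB _).2 ⟨a, hN⟩
  have hNB' : (↑(N⁻¹) : E) ∈ B := by
    obtain ⟨a', ha'⟩ := ha.exists_left_inv
    refine (hB _).2 ⟨a', ?_⟩
    have ha'E : algebraMap V E a' * algebraMap V E a = 1 := by rw [← map_mul, ha', map_one]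
    have := M.mul_mem_left (-(↑(N⁻¹) * algebraMap V E a')) hN
    convert this using 1
    linear_combination algebraMap V E a' * N.inv_mul - (↑(N⁻¹) : E) * ha'E
  have htop := subalgebra_eq_top_of_mem hu0 hu hθ huB hNB hNB' ((hB _).2 ⟨d, hd⟩)
  exact (hB x).1 (htop ▸ Algebra.mem_top)

lemma exists_sub_algebraMap_mem_span_pair (hu0 : u ≠ 0)
    (hu : u ^ p = p * (N : weightSubalgebra V p u v)) {a c e : V} (ha : IsUnit a) (hc : IsUnit c)
    (hN : (⟨u, left_mem_weightSubalgebra⟩ : weightSubalgebra V p u v) ∣ N - algebraMap V _ a)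
    {θ ψ : weightSubalgebra V p u v} (hθ : v = u * θ)
    (hψ : ψ = algebraMap V _ c * θ + algebraMap V _ e) (x : weightSubalgebra V p u v) :
    ∃ s : V, x - algebraMap V _ s ∈ Ideal.span {⟨u, left_mem_weightSubalgebra⟩, ψ} := by
  obtain ⟨c', hc'⟩ := hc.exists_left_inv
  have hc'E : algebraMap V (weightSubalgebra V p u v) c' * algebraMap V _ c = 1 := by
    rw [← map_mul, hc', map_one]
  refine exists_sub_algebraMap_mem hu0 hu hθ (Ideal.subset_span (Set.mem_insert _ _)) ha
    (Ideal.mem_of_dvd _ hN (Ideal.subset_span (Set.mem_insert _ _))) (d := -(c' * e)) ?_ x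
  convert Ideal.mul_mem_left _ (algebraMap V _ c')
    (Ideal.subset_span (Set.mem_insert_of_mem _ (Set.mem_singleton ψ))) using 1
  rw [hψ, map_neg, map_mul]
  linear_combination -θ * hc'E

lemma exists_maximalIdeal_eq_span_pair [IsLocalRing V]
    [Algebra.IsIntegral V (weightSubalgebra V p u v)]
    (hV : maximalIdeal V = Ideal.span {(p : V)}) (hp : p ≠ 0)
    (hu : u ^ p = p * (N : weightSubalgebra V p u v)) {ψ : weightSubalgebra V p u v}
    (hres : ∀ x : weightSubalgebra V p u v, ∃ s : V,
      x - algebraMap V _ s ∈ Ideal.span {⟨u, left_mem_weightSubalgebra⟩, ψ})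
    (huψ : (⟨u, left_mem_weightSubalgebra⟩ : weightSubalgebra V p u v) ∣ ψ ^ p) :
    ∃ _ : IsLocalRing (weightSubalgebra V p u v), maximalIdeal (weightSubalgebra V p u v) =
      Ideal.span {⟨u, left_mem_weightSubalgebra⟩, ψ} := by
  let E := weightSubalgebra V p u v
  let u' : E := ⟨u, left_mem_weightSubalgebra⟩
  have hu' : u' ^ p = algebraMap V E p * N := Subtype.ext (by simpa [u'] using hu)
  have hup : algebraMap V E p = u' ^ p * ↑(N⁻¹) := by rw [hu', mul_assoc, N.mul_inv, mul_one]
  have huM : u' ∈ Ideal.span {u', ψ} := Ideal.subset_span (Set.mem_insert _ _)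
  have hmap : (maximalIdeal V).map (algebraMap V E) = Ideal.span {algebraMap V E p} := by
    rw [hV, Ideal.map_span, Set.image_singleton]
  have hurad : u' ∈ ((maximalIdeal V).map (algebraMap V E)).radical :=
    ⟨p, by rw [hmap, hu']; exact Ideal.mul_mem_right _ _ (Ideal.mem_span_singleton_self _)⟩
  refine exists_isLocalRing_maximalIdeal_eq (V := V) ?_ ?_ hres
  · rw [hmap, Ideal.span_singleton_le_iff_mem, hup]
    exact Ideal.mul_mem_right _ _ (Ideal.pow_mem_of_mem _ huM _ (Nat.pos_of_ne_zero hp))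
  · rw [Ideal.span_le, Set.insert_subset_iff, Set.singleton_subset_iff]
    exact ⟨hurad, (Ideal.radical_isRadical _) ⟨p, Ideal.mem_of_dvd _ huψ hurad⟩⟩

end Unit

lemma exists_unit_coe_eq_aeval [IsLocalRing V] [Algebra.IsIntegral V (weightSubalgebra V p u v)]
    (hpV : (p : V) ∈ maximalIdeal V) {F : V[X]} (hF : IsUnit (F.coeff 0))
    (hu : u ^ p = p * aeval u F) :
    ∃ N : (weightSubalgebra V p u v)ˣ, ((N : weightSubalgebra V p u v) : K) = aeval u F ∧
      (⟨u, left_mem_weightSubalgebra⟩ : weightSubalgebra V p u v) ∣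
        N - algebraMap V _ (F.coeff 0) := by
  let u' : weightSubalgebra V p u v := ⟨u, left_mem_weightSubalgebra⟩
  have hu' : u' ^ p = algebraMap V _ p * aeval u' F :=
    Subtype.ext (by simpa [u', aeval_subalgebra_coe] using hu)
  have hrad : u' ∈ ((maximalIdeal V).map (algebraMap V _)).radical :=
    ⟨p, by rw [hu']; exact Ideal.mul_mem_right _ _ (Ideal.mem_map_of_mem _ hpV)⟩
  obtain ⟨N, hN⟩ := isUnit_algebraMap_add_of_mem_radical hF
    (Ideal.mul_mem_right (aeval u' F.divX) _ hrad)
  rw [← aeval_eq_coeff_zero_add] at hN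
  refine ⟨N, by rw [hN, aeval_subalgebra_coe], aeval u' F.divX, ?_⟩
  rw [hN, aeval_eq_coeff_zero_add u' F, add_sub_cancel_left]

lemma exists_sub_smul_mem_range {V E K : Type*} [CommRing V] [CommRing E] [CommRing K]
    [Algebra V E] [Algebra E K] [Algebra V K] [IsScalarTower V E K] {M : Ideal E}
    (hres : ∀ x : E, ∃ s : V, x - algebraMap V E s ∈ M) (N : Eˣ) {t : K}
    (ht : ∀ m ∈ M, algebraMap E K m * t ∈ (algebraMap E K).range) (a b : E) :
    ∃ s : V, algebraMap E K a + algebraMap E K b * t - s • (algebraMap E K N * t) ∈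
      (algebraMap E K).range := by
  obtain ⟨s, hs⟩ := hres (b * ↑(N⁻¹))
  refine ⟨s, ?_⟩
  convert add_mem (RingHom.mem_range_self (algebraMap E K) a)
    (ht _ (M.mul_mem_left (N : E) hs)) using 1
  have hN : algebraMap E K N * algebraMap E K ↑(N⁻¹) = 1 := by rw [← map_mul, N.mul_inv, map_one]
  rw [Algebra.smul_def, IsScalarTower.algebraMap_apply V E K]
  simp only [map_mul, map_sub]
  linear_combination -algebraMap E K b * t * hN

lemma exists_sub_smul_mem_weightSubalgebra_of_pow_eq [IsLocalRing V]
    (hV : maximalIdeal V = Ideal.span {(p : V)}) (hp : Odd p) (hp3 : 3 ≤ p)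
    [Algebra.IsIntegral V (weightSubalgebra V p u v)] (hu0 : u ≠ 0)
    {N : (weightSubalgebra V p u v)ˣ} (hu : u ^ p = p * (N : weightSubalgebra V p u v))
    {ψ β γ u' : weightSubalgebra V p u v} (hu' : u = u')
    (hres : ∀ x : weightSubalgebra V p u v, ∃ s : V, x - algebraMap V _ s ∈ Ideal.span {u', ψ})
    (hβ : IsUnit β) (hψ : ψ ^ p = u' * (β * ψ + γ * u')) {x : K} (hx : IsIntegral V x) {n : ℕ}
    (hn : (p : K) ^ n * x ∈ weightSubalgebra V p u v) :
    ∃ s : V, x - s • ((p : K)⁻¹ * (u * ψ) ^ (p - 1)) ∈ weightSubalgebra V p u v := by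
  obtain ⟨q, rfl⟩ := Nat.exists_eq_add_of_le' hp3
  obtain rfl : u' = ⟨u, left_mem_weightSubalgebra⟩ := Subtype.ext hu'.symm
  have hpK : ((q + 3 : ℕ) : K) ≠ 0 := NeZero.ne _
  obtain ⟨_, hm⟩ := exists_maximalIdeal_eq_span_pair hV (q + 2).succ_ne_zero hu hres ⟨_, hψ⟩
  have h2 : IsUnit (2 : V) :=
    isUnit_two_of_odd_of_natCast_mem_maximalIdeal hp (hV ▸ Ideal.mem_span_singleton_self _)
  have h2E : IsUnit (2 : weightSubalgebra V (q + 3) u v) := by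
    simpa only [map_ofNat] using h2.map (algebraMap V (weightSubalgebra V (q + 3) u v))
  have hψK : (ψ : K) ^ (q + 3) = u * (β * ψ + γ * u) := congrArg Subtype.val hψ
  set t : K := (ψ : K) ^ (q + 2) / u
  have hut : u * t = (ψ : K) ^ (q + 2) := mul_div_cancel₀ _ hu0
  have hψt : ψ * t = β * ψ + γ * u := by
    refine mul_left_cancel₀ hu0 ?_
    rw [mul_left_comm, hut, ← pow_succ', hψK]
  obtain ⟨a, b, rfl⟩ := exists_eq_add_mul_of_isIntegral hm h2E hβ
    (fun h ↦ hu0 (congrArg Subtype.val h)) hψ hut hx.tower_top (n := (q + 3) * n)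
    ⟨(N : weightSubalgebra V (q + 3) u v) ^ n * ⟨_, hn⟩, by
      change ((N : weightSubalgebra V (q + 3) u v) : K) ^ n * _ = u ^ ((q + 3) * n) * x
      rw [pow_mul, hu]
      ring⟩
  obtain ⟨s, y, hy⟩ := exists_sub_smul_mem_range hres N (t := t) (fun m hm ↦ by
    obtain ⟨k, l, rfl⟩ := Ideal.mem_span_pair.1 hm
    refine ⟨k * ψ ^ (q + 2) + l * (β * ψ + γ * ⟨u, left_mem_weightSubalgebra⟩), ?_⟩
    change (k : K) * ψ ^ (q + 2) + l * (β * ψ + γ * u) = (k * u + l * ψ) * t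
    linear_combination -(k : K) * hut - l * hψt) a b
  have ht : ((N : weightSubalgebra V (q + 3) u v) : K) * t =
      ((q + 3 : ℕ) : K)⁻¹ * (u * ψ) ^ (q + 2) := by
    rw [eq_inv_mul_iff_mul_eq₀ hpK, ← mul_assoc, ← hu, pow_succ u, mul_assoc, hut, mul_pow]
  refine ⟨s, ?_⟩
  change _ - s • (((q + 3 : ℕ) : K)⁻¹ * (u * ψ) ^ (q + 2)) ∈ _
  rw [← ht]
  exact hy ▸ y.2

lemma exists_sub_smul_mem_weightSubalgebra_of_isIntegral [IsLocalRing V]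
    (hV : maximalIdeal V = Ideal.span {(p : V)}) (hp : Odd p) (hp3 : 3 ≤ p)
    [Algebra.IsIntegral V (weightSubalgebra V p u v)] {F : V[X]} (hF : IsUnit (F.coeff 0))
    (hu : u ^ p = p * aeval u F) {α c e : V} (hα : IsUnit α) (hc : IsUnit c) {τ w : K}
    (hτ : τ = algebraMap V K c * v + algebraMap V K e * u)
    (hτp : τ ^ p = p * (algebraMap V K α * τ + w)) (hw : w ∈ weightFiltration V p u v 2)
    {x : K} (hx : IsIntegral V x) {n : ℕ} (hn : (p : K) ^ n * x ∈ weightSubalgebra V p u v) :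
    ∃ s : V, x - s • ((p : K)⁻¹ * τ ^ (p - 1)) ∈ weightSubalgebra V p u v := by
  obtain ⟨N, hNF, hN⟩ := exists_unit_coe_eq_aeval (u := u) (v := v)
    (hV ▸ Ideal.mem_span_singleton_self _) hF hu
  rw [← hNF] at hu
  have hp0 : p ≠ 0 := by omega
  have hNK : ((N : weightSubalgebra V p u v) : K) ≠ 0 :=
    (N.isUnit.map (weightSubalgebra V p u v).val).ne_zero
  have hu0 : u ≠ 0 := fun h ↦ mul_ne_zero (NeZero.ne _) hNK (by rw [← hu, h, zero_pow hp0])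
  obtain ⟨θ, hθ⟩ := exists_eq_pow_mul_of_mem_weightFiltration hp0 hu0 hu (n := 1)
    right_mem_weightFiltration
  obtain ⟨w', rfl⟩ := exists_eq_pow_mul_of_mem_weightFiltration hp0 hu0 hu (n := 2) hw
  rw [pow_one] at hθ
  set ψ := algebraMap V _ c * θ + algebraMap V _ e with hψ
  have hτψ : τ = u * ψ := by
    change τ = u * (algebraMap V K c * θ + algebraMap V K e)
    linear_combination hτ + algebraMap V K c * hθ
  rw [hτψ]
  refine exists_sub_smul_mem_weightSubalgebra_of_pow_eq hV hp hp3 hu0 hu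
    (β := algebraMap V _ α * ↑(N⁻¹)) (γ := w' * ↑(N⁻¹)) (u' := ⟨u, left_mem_weightSubalgebra⟩) rfl
    (exists_sub_algebraMap_mem_span_pair hu0 hu hF hc hN hθ hψ)
    ((hα.map _).mul N⁻¹.isUnit) (Subtype.ext (mul_left_cancel₀ (pow_ne_zero p hu0) ?_)) hx hn
  have hpN := natCast_zpow_eq_zpow_mul hu 1
  rw [zpow_one, mul_one, zpow_natCast, zpow_neg_one] at hpN
  set N' : weightSubalgebra V p u v := ↑(N⁻¹)
  change u ^ p * (ψ : K) ^ p = u ^ p * (u * (algebraMap V K α * N' * ψ + w' * N' * u))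
  rw [← mul_pow, ← hτψ, hτp, hτψ]
  linear_combination (algebraMap V K α * (u * ψ) + u ^ 2 * w') * hpN

end WeightSubalgebraOverLocalRing

section Globalization

variable {S K : Type*} [CommRing S] [Field K] [Algebra S K] {p : ℕ} [NeZero (p : K)] {u v : K}
  {F G : S[X]} {α c e : S} {τ w x : K} {n : ℕ}

lemma mem_span_weightMonomials_union_of_isLocalization {P : Ideal S} [P.IsPrime]
    (hP : P = Ideal.span {(p : S)}) (hp : Odd p) (hp3 : 3 ≤ p) (hF : F.natDegree < p)
    (hu : u ^ p = p * aeval u F) (hG : G.natDegree < p) (hv : v ^ p = p * aeval v G)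
    (hF0 : ¬(p : S) ∣ F.coeff 0) (hα : ¬(p : S) ∣ α) (hc : ¬(p : S) ∣ c)
    (hτ : τ = algebraMap S K c * v + algebraMap S K e * u)
    (hτp : τ ^ p = p * (algebraMap S K α * τ + w)) (hw : w ∈ weightFiltration S p u v 2)
    (hx : IsIntegral S x) (hn : (p : K) ^ n * x ∈ weightSubalgebra S p u v)
    [Algebra (Localization.AtPrime P) K] [IsScalarTower S (Localization.AtPrime P) K] :
    x ∈ Submodule.span (Localization.AtPrime P)
      (weightMonomials p u v 0 ∪ {(p : K)⁻¹ * τ ^ (p - 1)}) := by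
  let V := Localization.AtPrime P
  have hunit : ∀ {s : S}, ¬(p : S) ∣ s → IsUnit (algebraMap S V s) := fun {s} hs ↦
    IsLocalization.map_units V
      (⟨s, fun h ↦ hs (Ideal.mem_span_singleton.1 (hP ▸ h))⟩ : P.primeCompl)
  have hle : ∀ m, (weightFiltration S p u v m : Set K) ⊆ weightFiltration V p u v m :=
    fun m ↦ Submodule.span_subset_span S V _
  have hV : IsLocalRing.maximalIdeal V = Ideal.span {(p : V)} := by
    rw [← Localization.AtPrime.map_eq_maximalIdeal, congrArg (Ideal.map _) hP, Ideal.map_span,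
      Set.image_singleton, map_natCast]
  have hu' : u ^ p = p * aeval u (F.map (algebraMap S V)) := by rwa [aeval_map_algebraMap]
  have hv' : v ^ p = p * aeval v (G.map (algebraMap S V)) := by rwa [aeval_map_algebraMap]
  have hE : Algebra.IsIntegral V (weightSubalgebra V p u v) :=
    (Subalgebra.isIntegral_iff _).2 fun y ↦ isIntegral_of_mem_weightFiltration
      (natDegree_map_le.trans_lt hF) hu' (natDegree_map_le.trans_lt hG) hv'
  obtain ⟨s, hs⟩ := exists_sub_smul_mem_weightSubalgebra_of_isIntegral hV hp hp3
    (by rw [coeff_map]; exact hunit hF0) hu' (hunit hα) (hunit hc) (e := algebraMap S V e)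
    (by simpa only [← IsScalarTower.algebraMap_apply] using hτ)
    (by simpa only [← IsScalarTower.algebraMap_apply] using hτp) (hle 2 hw) hx.tower_top (hle 0 hn)
  rw [Submodule.span_union]
  exact Submodule.mem_sup.2 ⟨_, hs, _, Submodule.smul_mem _ s (Submodule.mem_span_singleton_self _),
    sub_add_cancel _ _⟩

lemma exists_smul_mem_weightFiltration_sup_span [IsDomain S] [FaithfulSMul S K]
    (hpS : Prime (p : S)) (hp : Odd p) (hp3 : 3 ≤ p) (hF : F.natDegree < p)
    (hu : u ^ p = p * aeval u F) (hG : G.natDegree < p) (hv : v ^ p = p * aeval v G)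
    (hF0 : ¬(p : S) ∣ F.coeff 0) (hα : ¬(p : S) ∣ α) (hc : ¬(p : S) ∣ c)
    (hτ : τ = algebraMap S K c * v + algebraMap S K e * u)
    (hτp : τ ^ p = p * (algebraMap S K α * τ + w)) (hw : w ∈ weightFiltration S p u v 2)
    (hx : IsIntegral S x) (hn : (p : K) ^ n * x ∈ weightSubalgebra S p u v) :
    ∃ s : S, ¬(p : S) ∣ s ∧
      s • x ∈ weightFiltration S p u v 0 ⊔ Submodule.span S {(p : K)⁻¹ * τ ^ (p - 1)} := by
  let P := Ideal.span {(p : S)}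
  have hP : P.IsPrime := (Ideal.span_singleton_prime hpS.ne_zero).2 hpS
  let _ : Algebra (Localization.AtPrime P) K := (IsLocalization.lift (M := P.primeCompl)
    (g := algebraMap S K) fun s ↦ IsUnit.mk0 _ fun h ↦ s.2 (by
      rw [(map_eq_zero_iff _ (FaithfulSMul.algebraMap_injective S K)).1 h]
      exact P.zero_mem)).toAlgebra
  have : IsScalarTower S (Localization.AtPrime P) K :=
    .of_algebraMap_eq fun s ↦ (IsLocalization.lift_eq _ s).symm
  obtain ⟨⟨s, hs⟩, hsx⟩ := multiple_mem_span_of_mem_localization_span P.primeCompl _ _ _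
    (mem_span_weightMonomials_union_of_isLocalization (P := P) rfl hp hp3 hF hu hG hv hF0 hα hc hτ
      hτp hw hx hn)
  rw [Submodule.span_union] at hsx
  exact ⟨s, fun h ↦ hs (Ideal.mem_span_singleton.2 h), hsx⟩

end Globalization

section MonomialBasis

lemma span_pow_mul_pow_eq_adjoin {L K : Type*} [CommRing L] [CommRing K] [Algebra L K] {p : ℕ}
    {x y : K} {F G : L[X]} (hF : F.Monic) (hFp : F.natDegree = p) (hx : aeval x F = 0)
    (hG : G.Monic) (hGp : G.natDegree = p) (hy : aeval y G = 0) :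
    Submodule.span L (Set.range fun k : Fin p × Fin p ↦ x ^ (k.1 : ℕ) * y ^ (k.2 : ℕ)) =
      Subalgebra.toSubmodule (Algebra.adjoin L {x, y}) := by
  rw [Set.insert_eq, Algebra.adjoin_union_coe_submodule,
    ← Submodule.span_range_natDegree_eq_adjoin hF hx,
    ← Submodule.span_range_natDegree_eq_adjoin hG hy, Submodule.span_mul_span, hFp, hGp]
  congr 1
  ext w
  simp only [Set.mem_range, Prod.exists, Set.mem_mul, Finset.coe_image, Finset.coe_range,
    Set.exists_mem_image, Set.mem_Iio, Fin.exists_iff, exists_prop]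

lemma exists_basis_pow_mul_pow {L K : Type*} [Field L] [Field K] [Algebra L K] {p : ℕ}
    {x y : K} {F G : L[X]} (hF : F.Monic) (hFp : F.natDegree = p) (hx : aeval x F = 0)
    (hG : G.Monic) (hGp : G.natDegree = p) (hy : aeval y G = 0)
    (hxy : Algebra.adjoin L {x, y} = ⊤) (hdeg : Module.finrank L K = p ^ 2) :
    ∃ b : Module.Basis (Fin p × Fin p) L K, ∀ k, b k = x ^ (k.1 : ℕ) * y ^ (k.2 : ℕ) :=
  ⟨basisOfTopLeSpanOfCardEqFinrank _
    (by rw [span_pow_mul_pow_eq_adjoin hF hFp hx hG hGp hy, hxy, Algebra.top_toSubmodule])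
    (by simp [hdeg, sq]), fun k ↦ by rw [coe_basisOfTopLeSpanOfCardEqFinrank]⟩

end MonomialBasis

section WeightBasis

variable {S K : Type*} [CommRing S] [Field K] [Algebra S K] {p : ℕ} {u v : K} {F G : S[X]}

/-- The monomial `pˡuⁱvʲ` with `l` as small as possible for the weight to be nonnegative. -/
def weightBasisMonomial (p : ℕ) (u v : K) (k : Fin p × Fin p) : K :=
  (p : K) ^ (-((k.1 + k.2 : ℕ) / p : ℕ) : ℤ) * u ^ (k.1 : ℕ) * v ^ (k.2 : ℕ)

lemma weightBasisMonomial_mem_weightFiltration (k : Fin p × Fin p) :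
    weightBasisMonomial p u v k ∈ weightFiltration S p u v 0 := by
  refine zpow_mul_pow_mul_pow_mem_weightFiltration ?_
  have := Nat.mul_div_le (k.1 + k.2 : ℕ) p
  zify at this
  push_cast
  linarith

variable [NeZero (p : K)]

lemma pow_mul_eq_sum_of_pow_eq_natCast_mul_aeval (hF : F.natDegree < p)
    (hu : u ^ p = p * aeval u F) (l : ℤ) (i : ℕ) (y : K) :
    (p : K) ^ l * u ^ (p + i) * y =
      ∑ k ∈ Finset.range p, F.coeff k • ((p : K) ^ (l + 1) * u ^ (k + i) * y) := by
  rw [pow_add, hu, aeval_eq_sum_range' hF, zpow_add_one₀ (NeZero.ne _), Finset.mul_sum,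
    Finset.sum_mul, Finset.mul_sum, Finset.sum_mul]
  refine Finset.sum_congr rfl fun k _ ↦ ?_
  simp only [Algebra.smul_def]
  ring

lemma zpow_mul_pow_mul_pow_mem_span_range (hF : F.natDegree < p)
    (hu : u ^ p = p * aeval u F) (hG : G.natDegree < p) (hv : v ^ p = p * aeval v G) (l : ℤ)
    (i j : ℕ) (h : 0 ≤ i + j + p * l) :
    (p : K) ^ l * u ^ i * v ^ j ∈ Submodule.span S (Set.range (weightBasisMonomial p u v)) := by
  induction hn : i + j using Nat.strong_induction_on generalizing i j l with
  | _ n ih =>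
  subst hn
  obtain hi | ⟨i, rfl⟩ := lt_or_ge i p |>.imp_right Nat.exists_eq_add_of_le
  · obtain hj | ⟨j, rfl⟩ := lt_or_ge j p |>.imp_right Nat.exists_eq_add_of_le
    · have hmod := Nat.div_add_mod (i + j) p
      have hlt := Nat.mod_lt (i + j) (by omega : p > 0)
      have hl : -((i + j) / p : ℕ) ≤ l := by
        zify at hmod hlt
        refine neg_le_iff_add_nonneg.2 <| Int.lt_add_one_iff.1 <|
          pos_of_mul_pos_right ?_ p.cast_nonneg'
        push_cast at h ⊢
        linarith
      obtain ⟨m, hm⟩ := Int.le.dest hl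
      have hmem := Submodule.smul_mem _ ((p : S) ^ m)
        (Submodule.subset_span (R := S)
          (Set.mem_range_self (f := weightBasisMonomial p u v) (⟨i, hi⟩, ⟨j, hj⟩)))
      convert hmem using 1
      dsimp only [weightBasisMonomial]
      rw [Algebra.smul_def, map_pow, map_natCast, ← hm, zpow_add₀ (NeZero.ne _), zpow_natCast]
      ring
    · rw [mul_right_comm, pow_mul_eq_sum_of_pow_eq_natCast_mul_aeval hG hv]
      refine Submodule.sum_mem _ fun k hk ↦ Submodule.smul_mem _ _ ?_
      have hk := Finset.mem_range.1 hk
      rw [mul_right_comm]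
      exact ih _ (by omega) _ _ _ (by push_cast at h ⊢; linarith) rfl
  · rw [pow_mul_eq_sum_of_pow_eq_natCast_mul_aeval hF hu]
    refine Submodule.sum_mem _ fun k hk ↦ Submodule.smul_mem _ _ ?_
    have hk := Finset.mem_range.1 hk
    exact ih _ (by omega) _ _ _ (by push_cast at h ⊢; linarith) rfl

lemma weightFiltration_zero_eq_span_range (hF : F.natDegree < p) (hu : u ^ p = p * aeval u F)
    (hG : G.natDegree < p) (hv : v ^ p = p * aeval v G) :
    weightFiltration S p u v 0 = Submodule.span S (Set.range (weightBasisMonomial p u v)) := by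
  refine le_antisymm (Submodule.span_le.2 ?_) (Submodule.span_le.2 ?_)
  · rintro _ ⟨l, i, j, h, rfl⟩
    exact zpow_mul_pow_mul_pow_mem_span_range hF hu hG hv l i j h
  · rintro _ ⟨k, rfl⟩
    exact weightBasisMonomial_mem_weightFiltration k

lemma weightSubalgebra_eq_adjoin {ω μ : K} {r s : S} (hω : ω - algebraMap S K r = u)
    (hμ : μ - algebraMap S K s = v) (hF : F.natDegree < p) (hu : u ^ p = p * aeval u F)
    (hG : G.natDegree < p) (hv : v ^ p = p * aeval v G) :
    weightSubalgebra S p u v = Algebra.adjoin S ({ω, μ} ∪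
      {x | ∃ i : ℕ, 1 ≤ i ∧ i ≤ p - 1 ∧ x = (p : K)⁻¹ * (u ^ i * v ^ (p - i))}) := by
  set A := Algebra.adjoin S ({ω, μ} ∪
      {x | ∃ i : ℕ, 1 ≤ i ∧ i ≤ p - 1 ∧ x = (p : K)⁻¹ * (u ^ i * v ^ (p - i))})
  have huA : u ∈ A := hω ▸ sub_mem (Algebra.subset_adjoin (.inl (Set.mem_insert ω {μ})))
    (algebraMap_mem A r)
  have hvA : v ∈ A := hμ ▸ sub_mem (Algebra.subset_adjoin (.inl (Set.mem_insert_of_mem ω rfl)))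
    (algebraMap_mem A s)
  refine le_antisymm ?_ (Algebra.adjoin_le ?_)
  · refine (weightFiltration_zero_eq_span_range hF hu hG hv).trans_le
      (Submodule.span_le (p := Subalgebra.toSubmodule A).2 ?_)
    rintro _ ⟨⟨⟨i, hi⟩, ⟨j, hj⟩⟩, rfl⟩
    dsimp only [weightBasisMonomial]
    obtain hij | hij := lt_or_ge (i + j) p
    · rw [Nat.div_eq_of_lt hij]
      simpa using mul_mem (pow_mem huA i) (pow_mem hvA j)
    · have hη : (p : K)⁻¹ * (u ^ i * v ^ (p - i)) ∈ A :=
        Algebra.subset_adjoin (.inr ⟨i, by omega, by omega, rfl⟩)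
      have hmem := mul_mem hη (pow_mem hvA (i + j - p))
      rw [mul_assoc, mul_assoc, ← pow_add, show p - i + (i + j - p) = j by omega,
        ← mul_assoc] at hmem
      rwa [Nat.div_eq_of_lt_le (k := 1) (by omega) (by omega), Nat.cast_one, zpow_neg_one]
  · rintro _ ((rfl | rfl) | ⟨i, _, _, rfl⟩)
    · exact sub_eq_iff_eq_add.1 hω ▸ add_mem left_mem_weightSubalgebra (algebraMap_mem _ r)
    · exact sub_eq_iff_eq_add.1 hμ ▸ add_mem right_mem_weightSubalgebra (algebraMap_mem _ s)
    · have := zpow_mul_pow_mul_pow_mem_weightFiltration (S := S) (p := p) (u := u) (v := v)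
        (n := 0) (l := -1) (i := i) (j := p - i) (by omega)
      rwa [zpow_neg_one, mul_assoc] at this

lemma exists_basis_weightFiltration {L : Type*} [Field L] [Algebra L K] [Algebra S L]
    [IsScalarTower S L K] [FaithfulSMul S L] [IsDomain S]
    (b : Module.Basis (Fin p × Fin p) L K) (hb : ∀ k, b k = u ^ (k.1 : ℕ) * v ^ (k.2 : ℕ))
    (hF : F.natDegree < p) (hu : u ^ p = p * aeval u F)
    (hG : G.natDegree < p) (hv : v ^ p = p * aeval v G) :
    ∃ b : Module.Basis (Fin p × Fin p) S (weightFiltration S p u v 0),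
      ∀ k, (b k : K) = weightBasisMonomial p u v k := by
  have hpL : (p : L) ≠ 0 := fun h ↦
    NeZero.ne (p : K) (by rw [← map_natCast (algebraMap L K), h, map_zero])
  let c := b.isUnitSMul (w := fun k ↦ (p : L) ^ (-((k.1 + k.2 : ℕ) / p : ℕ) : ℤ))
    fun k ↦ (zpow_ne_zero _ hpL).isUnit
  have hc : ⇑c = weightBasisMonomial p u v := by
    ext k
    simp only [c, Module.Basis.isUnitSMul_apply, hb, Algebra.smul_def, map_zpow₀, map_natCast,
      weightBasisMonomial, mul_assoc]
  rw [weightFiltration_zero_eq_span_range hF hu hG hv, ← hc]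
  exact ⟨c.restrictScalars S, c.restrictScalars_apply S⟩

end WeightBasis

section TraceOfGradedBasis

variable {L K G : Type*} [Field L] [Field K] [Algebra L K] [AddGroup G] [Finite G]
  {b : Module.Basis G L K}

lemma trace_basis_eq_zero (hb : ∀ k l, ∃ r : L, b k * b l = r • b (k + l)) {k : G} (hk : k ≠ 0) :
    Algebra.trace L K (b k) = 0 := by
  classical
  have := Fintype.ofFinite G
  rw [Algebra.trace_eq_matrix_trace b, Matrix.trace]
  refine Finset.sum_eq_zero fun m _ ↦ ?_
  obtain ⟨r, hr⟩ := hb k m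
  rw [Matrix.diag_apply, Algebra.leftMulMatrix_eq_repr_mul, hr, map_smul, Finsupp.smul_apply,
    Module.Basis.repr_self, Finsupp.single_eq_of_ne (by simpa using hk), smul_zero]

lemma trace_mul_inv_basis (hb : ∀ k l, ∃ r : L, b k * b l = r • b (k + l)) (w : K) (m : G) :
    Algebra.trace L K (w * (b m)⁻¹) = Module.finrank L K * b.repr w m := by
  have := Fintype.ofFinite G
  have hm : b m ≠ 0 := b.ne_zero m
  have htr : ∀ k ≠ m, Algebra.trace L K (b k * (b m)⁻¹) = 0 := by
    intro k hk
    obtain ⟨r, hr⟩ := hb (k - m) m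
    rw [sub_add_cancel] at hr
    have hr0 : r ≠ 0 := by
      rintro rfl
      exact mul_ne_zero (b.ne_zero (k - m)) hm (by rw [hr, zero_smul])
    rw [← inv_smul_smul₀ hr0 (b k), ← hr, smul_mul_assoc, mul_inv_cancel_right₀ hm, map_smul,
      trace_basis_eq_zero hb (sub_ne_zero.2 hk), smul_zero]
  conv_lhs => rw [← b.sum_repr w, Finset.sum_mul, map_sum]
  rw [Finset.sum_eq_single_of_mem m (Finset.mem_univ m)
    fun k _ hk ↦ by rw [smul_mul_assoc, map_smul, htr k hk, smul_zero]]
  rw [smul_mul_assoc, mul_inv_cancel₀ hm, map_smul, smul_eq_mul, mul_comm,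
    ← map_one (algebraMap L K), Algebra.trace_algebraMap, nsmul_one]

end TraceOfGradedBasis

section IntegralCoordinates

variable {S L K : Type*} [CommRing S] [Field L] [Field K] [Algebra L K] [Algebra S L] [Algebra S K]
  [IsScalarTower S L K] {n : ℕ}

lemma isIntegral_algebraMap_trace_mul_inv_mul [FiniteDimensional L K] [Algebra.IsSeparable L K]
    (hn : 0 < n) {w c : K} (hw : IsIntegral S w) (hc0 : c ≠ 0)
    (hc : c ^ n ∈ (algebraMap L K).range) :
    IsIntegral S (algebraMap L K (Algebra.trace L K (w * c⁻¹)) * c) := by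
  let Ω := AlgebraicClosure K
  refine (isIntegral_algebraMap_iff (algebraMap K Ω).injective).1 ?_
  rw [map_mul, ← IsScalarTower.algebraMap_apply, trace_eq_sum_embeddings, Finset.sum_mul]
  refine IsIntegral.sum _ fun σ _ ↦ ?_
  have hroot : (algebraMap K Ω c / σ c) ^ n = 1 := by
    obtain ⟨r, hr⟩ := hc
    rw [div_pow, ← map_pow, ← map_pow, ← hr, ← IsScalarTower.algebraMap_apply, AlgHom.commutes,
      div_self]
    rw [IsScalarTower.algebraMap_apply L K Ω, hr, Ne, map_eq_zero]
    exact pow_ne_zero n hc0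
  rw [map_mul, map_inv₀, mul_assoc, mul_comm (σ c)⁻¹, ← div_eq_mul_inv]
  exact (hw.map (σ.restrictScalars S)).mul (IsIntegral.of_pow hn (hroot ▸ isIntegral_one))

lemma exists_algebraMap_eq_of_pow_mul_eq [IsDomain S] [UniqueFactorizationMonoid S]
    [IsFractionRing S L] {h s : S} (hh : ∀ q : S, Prime q → ¬q ^ n ∣ h) {t : L}
    (hs : t ^ n * algebraMap S L h = algebraMap S L s) : t ∈ (algebraMap S L).range := by
  have hred := IsFractionRing.num_den_reduced S t
  have hm0 := nonZeroDivisors.ne_zero (IsFractionRing.den S t).2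
  have ht := IsFractionRing.mk'_num_den' S t
  set a := IsFractionRing.num S t
  set m : S := (IsFractionRing.den S t : S)
  have hmL : algebraMap S L m ≠ 0 := by simpa using hm0
  have hS : a ^ n * h = s * m ^ n := by
    apply IsFractionRing.injective S L
    rw [map_mul, map_mul, map_pow, map_pow, ← hs, ← ht, div_pow]
    field_simp
  obtain ⟨m', hm'⟩ : IsUnit m := by
    by_contra hmu
    obtain ⟨q, hq, hqm⟩ := WfDvdMonoid.exists_irreducible_factor hmu hm0
    refine hh q hq.prime (hq.prime.pow_dvd_of_dvd_mul_left n (a := a ^ n)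
      (fun h ↦ hq.not_isUnit (hred (hq.prime.dvd_of_dvd_pow h) hqm)) ?_)
    rw [hS]
    exact (pow_dvd_pow_of_dvd hqm n).mul_left s
  refine ⟨a * ↑m'⁻¹, ?_⟩
  rw [← ht, eq_div_iff hmL, ← map_mul, ← hm', Units.inv_mul_cancel_right]

lemma not_pow_dvd_pow_of_squarefree {S : Type*} [CommRing S] [IsDomain S] {a q : S}
    (ha : Squarefree a) (hq : Prime q) {i : ℕ} (hi : i < n) : ¬q ^ n ∣ a ^ i := by
  intro h
  obtain ⟨m, rfl⟩ := hq.dvd_of_dvd_pow ((dvd_pow_self q hi.ne_bot).trans h)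
  have hqm : q ^ (i + 1) ∣ q ^ i * m ^ i := mul_pow q m i ▸ (pow_dvd_pow q hi).trans h
  rw [pow_succ, mul_dvd_mul_iff_left (pow_ne_zero i hq.ne_zero)] at hqm
  exact hq.not_isUnit (ha q (mul_dvd_mul_left q (hq.dvd_of_dvd_pow hqm)))

lemma finrank_mul_repr_mem_range_of_isIntegral [FiniteDimensional L K] [CharZero L] [IsDomain S]
    [UniqueFactorizationMonoid S] [IsFractionRing S L] {G : Type*} [AddGroup G] [Finite G]
    {b : Module.Basis G L K} (hb : ∀ k l, ∃ r : L, b k * b l = r • b (k + l)) (hn : 0 < n) {h : S}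
    {m : G} (hm : b m ^ n = algebraMap S K h) (hh : ∀ q : S, Prime q → ¬q ^ n ∣ h) {w : K}
    (hw : IsIntegral S w) : Module.finrank L K * b.repr w m ∈ (algebraMap S L).range := by
  rw [IsScalarTower.algebraMap_apply S L K] at hm
  have hint := (isIntegral_algebraMap_trace_mul_inv_mul hn hw (b.ne_zero m) ⟨_, hm.symm⟩).pow n
  rw [mul_pow, hm, ← map_pow, ← map_mul, isIntegral_algebraMap_iff (algebraMap L K).injective,
    trace_mul_inv_basis hb] at hint
  obtain ⟨s, hs⟩ := IsIntegrallyClosed.isIntegral_iff.1 hint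
  exact exists_algebraMap_eq_of_pow_mul_eq hh hs.symm

lemma exists_pow_mul_pow_eq_smul {p : ℕ} [NeZero p] {x y : K} {f g : S}
    (hx : x ^ p = algebraMap S K f) (hy : y ^ p = algebraMap S K g) (k l : Fin p × Fin p) :
    ∃ r : L, x ^ (k.1 : ℕ) * y ^ (k.2 : ℕ) * (x ^ (l.1 : ℕ) * y ^ (l.2 : ℕ)) =
      r • (x ^ ((k + l).1 : ℕ) * y ^ ((k + l).2 : ℕ)) := by
  have pow_mul_pow {z : K} {h : S} (hz : z ^ p = algebraMap S K h) (i j : Fin p) :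
      z ^ (i : ℕ) * z ^ (j : ℕ) =
        algebraMap S K (h ^ ((i + j : ℕ) / p)) * z ^ (i + j : Fin p).val := by
    rw [Fin.val_add, map_pow, ← hz, ← pow_mul, ← pow_add, ← pow_add, Nat.div_add_mod]
  refine ⟨algebraMap S L (f ^ ((k.1 + l.1 : ℕ) / p) * g ^ ((k.2 + l.2 : ℕ) / p)), ?_⟩
  rw [mul_mul_mul_comm, pow_mul_pow hx, pow_mul_pow hy, mul_mul_mul_comm, algebraMap_smul,
    Algebra.smul_def, map_mul, Prod.fst_add, Prod.snd_add]

lemma natCast_sq_mul_mem_of_isIntegral [IsDomain S] [UniqueFactorizationMonoid S]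
    [IsFractionRing S L] [CharZero L] {p : ℕ} [NeZero p] {x y : K} {f g : S}
    (hx : x ^ p = algebraMap S K f) (hy : y ^ p = algebraMap S K g) (hfg : Squarefree (f * g))
    {b : Module.Basis (Fin p × Fin p) L K} (hb : ∀ k, b k = x ^ (k.1 : ℕ) * y ^ (k.2 : ℕ))
    {E : Subalgebra S K} (hxE : x ∈ E) (hyE : y ∈ E) {w : K} (hw : IsIntegral S w) :
    (p : K) ^ 2 * w ∈ E := by
  have hp := NeZero.pos p
  have : FiniteDimensional L K := .of_basis b
  have hdim : Module.finrank L K = p ^ 2 := by simp [Module.finrank_eq_card_basis b, sq]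
  have hgr : ∀ k l, ∃ r : L, b k * b l = r • b (k + l) := fun k l ↦ by
    simpa only [hb] using exists_pow_mul_pow_eq_smul hx hy k l
  have hpow (m : Fin p × Fin p) : b m ^ p = algebraMap S K (f ^ (m.1 : ℕ) * g ^ (m.2 : ℕ)) := by
    rw [hb, mul_pow, pow_right_comm, pow_right_comm y, hx, hy, map_mul, map_pow, map_pow]
  have hnot (m : Fin p × Fin p) (q : S) (hq : Prime q) : ¬q ^ p ∣ f ^ (m.1 : ℕ) * g ^ (m.2 : ℕ) :=
    fun h ↦ not_pow_dvd_pow_of_squarefree hfg hq (Nat.sub_one_lt_of_lt hp) <| h.trans <| by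
      rw [mul_pow]
      exact mul_dvd_mul (pow_dvd_pow f (Nat.le_sub_one_of_lt m.1.2))
        (pow_dvd_pow g (Nat.le_sub_one_of_lt m.2.2))
  have hmem : (p : K) ^ 2 * w ∈ Submodule.span S (Set.range b) := by
    refine (b.mem_span_iff_repr_mem S _).2 fun m ↦ ?_
    obtain ⟨s, hs⟩ := finrank_mul_repr_mem_range_of_isIntegral hgr hp (hpow m) (hnot m) hw
    refine ⟨s, ?_⟩
    have hsmul : (p : K) ^ 2 * w = ((p : L) ^ 2) • w := by simp [Algebra.smul_def]
    rw [hs, hdim, hsmul, map_smul, Finsupp.smul_apply, smul_eq_mul, Nat.cast_pow]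
  refine (Submodule.span_le (p := Subalgebra.toSubmodule E)).2 ?_ hmem
  rintro _ ⟨k, rfl⟩
  rw [hb]
  exact E.mul_mem (E.pow_mem hxE _) (E.pow_mem hyE _)

end IntegralCoordinates

section Squarefree

variable {S : Type*} [CommRing S] [IsDomain S] [IsNoetherianRing S] {f g q : S}

lemma isHeightOnePrime_span_singleton (hq : Prime q) : IsHeightOnePrime (Ideal.span {q}) :=
  ⟨(Ideal.span_singleton_prime hq.ne_zero).2 hq,
    (PrimeSpectrum.height_eq_orderHeight _).symm.trans
      (Ideal.height_span_singleton_eq_one_of_mem_nonZeroDivisors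
        (mem_nonZeroDivisors_of_ne_zero hq.ne_zero) hq.not_isUnit)⟩

lemma PaperSquarefree.not_mul_self_dvd (hf : PaperSquarefree f) (hq : Prime q) : ¬q * q ∣ f := by
  intro hqf
  obtain ⟨hP, hP1⟩ := isHeightOnePrime_span_singleton hq
  let φ := algebraMap S (Localization.AtPrime (Ideal.span {q}))
  have hmem : φ q ∈ Ideal.span {φ f} :=
    hf _ hP hP1 (Ideal.mem_span_singleton.2 (dvd_of_mul_left_dvd hqf)) ▸
      Ideal.mem_map_of_mem _ (Ideal.mem_span_singleton_self q)
  have hφq : φ q ≠ 0 := (map_ne_zero_iff φ (IsLocalization.injective _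
    (Ideal.primeCompl_le_nonZeroDivisors (Ideal.span {q})))).2 hq.ne_zero
  have hdvd : φ q * φ q ∣ φ q * 1 := by
    rw [mul_one, ← map_mul]
    exact (map_dvd φ hqf).trans (Ideal.mem_span_singleton.1 hmem)
  have hunit := isUnit_of_dvd_one ((mul_dvd_mul_iff_left hφq).1 hdvd)
  exact (IsLocalization.AtPrime.isUnit_to_map_iff _ (Ideal.span {q}) q).1 hunit
    (Ideal.mem_span_singleton_self q)

variable [UniqueFactorizationMonoid S]

lemma PaperSquarefree.squarefree (hf : PaperSquarefree f) (hS : ∃ q : S, Irreducible q) :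
    Squarefree f :=
  (squarefree_iff_irreducible_sq_not_dvd_of_exists_irreducible hS).2
    fun _ hq ↦ hf.not_mul_self_dvd hq.prime

lemma SatisfiesA1.isRelPrime (hfg : SatisfiesA1 f g) (hf : f ≠ 0) : IsRelPrime f g :=
  WfDvdMonoid.isRelPrime_of_no_irreducible_factors (fun h ↦ hf h.1) fun _ hq hqf hqg ↦
    hfg _ (isHeightOnePrime_span_singleton hq.prime)
      ⟨Ideal.mem_span_singleton.2 hqf, Ideal.mem_span_singleton.2 hqg⟩

lemma PaperSquarefree.squarefree_mul (hf : PaperSquarefree f) (hg : PaperSquarefree g)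
    (hfg : SatisfiesA1 f g) (hS : ∃ q : S, Irreducible q) : Squarefree (f * g) :=
  squarefree_mul_iff.2 ⟨hfg.isRelPrime (hf.squarefree hS).ne_zero, hf.squarefree hS,
    hg.squarefree hS⟩

lemma squarefree_mul_of_paperSquarefree_or_isUnit (hS : ∃ q : S, Irreducible q)
    (h : (PaperSquarefree f ∧ PaperSquarefree g ∧ SatisfiesA1 f g) ∨ (IsUnit f ∧ IsUnit g)) :
    Squarefree (f * g) :=
  h.elim (fun ⟨hf, hg, hfg⟩ ↦ hf.squarefree_mul hg hfg hS) fun ⟨hf, hg⟩ ↦ (hf.mul hg).squarefree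

end Squarefree

section RadicalPolynomial

variable {S K : Type*} [CommRing S] [Field K] [Algebra S K] {p : ℕ}

lemma exists_pow_eq_natCast_mul_aeval (hp : p.Prime) {h a : S} {ω : K}
    (hω : ω ^ p = algebraMap S K (h ^ p + a * p)) :
    ∃ F : S[X], F.natDegree < p ∧ F.coeff 0 = a ∧ F.coeff 1 = -h ^ (p - 1) ∧
      (ω - algebraMap S K h) ^ p = p * aeval (ω - algebraMap S K h) F := by
  let H : S[X] := ∑ k ∈ Finset.Ioo 0 p, C (h ^ (p - k) * (p.choose k / p : ℕ)) * X ^ k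
  have hH (k : ℕ) : H.coeff k =
      if k ∈ Finset.Ioo 0 p then h ^ (p - k) * (p.choose k / p : ℕ) else 0 := by
    simp only [H, finsetSum_coeff, coeff_C_mul_X_pow, Finset.sum_ite_eq]
  have hHdeg : H.natDegree < p := by
    refine (natDegree_sum_le_of_forall_le (n := p - 1) _ _ fun k hk ↦ ?_).trans_lt
      (Nat.sub_one_lt hp.ne_zero)
    exact (natDegree_C_mul_X_pow_le _ _).trans (Nat.le_sub_one_of_lt (Finset.mem_Ioo.1 hk).2)
  refine ⟨C a - H, ?_, ?_, ?_, ?_⟩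
  · refine (natDegree_sub_le _ _).trans_lt (max_lt ?_ hHdeg)
    rw [natDegree_C]
    exact hp.pos
  · simp [hH]
  · rw [coeff_sub, coeff_C_succ, zero_sub, hH, if_pos (by simpa using hp.one_lt),
      Nat.choose_one_right, Nat.div_self hp.pos, Nat.cast_one, mul_one]
  · set u := ω - algebraMap S K h with hu
    have hH' : aeval u H =
        ∑ k ∈ Finset.Ioo 0 p, u ^ k * algebraMap S K h ^ (p - k) * (p.choose k / p : ℕ) := by
      simp only [H, map_sum, map_mul, map_pow, aeval_C, aeval_X, map_natCast]
      exact Finset.sum_congr rfl fun _ _ ↦ by ring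
    have hpow := add_pow_prime_eq' hp u (algebraMap S K h)
    rw [← hH', hu, sub_add_cancel, ← hu, hω, map_add, map_pow, map_mul, map_natCast] at hpow
    rw [map_sub, aeval_C]
    linear_combination -hpow

lemma isIntegral_of_sq_eq {A B : Type*} [CommRing A] [CommRing B] [Algebra A B] {x : B} {α δ : A}
    (hx : x ^ 2 = algebraMap A B α * x + algebraMap A B δ) : IsIntegral A x := by
  refine ⟨X ^ 2 - (C α * X + C δ), monic_X_pow_sub (degree_linear_le.trans_lt (by norm_num)), ?_⟩
  simp [hx]

lemma mem_of_isIntegral_of_mul_mem {A : Subalgebra S K} [IsIntegrallyClosed A] {x y : K}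
    (hx : IsIntegral A x) (hy : y ∈ A) (hy0 : y ≠ 0) (hyx : y * x ∈ A) : x ∈ A := by
  let φ : FractionRing A →ₐ[A] K := IsFractionRing.liftAlgHom (g := Algebra.ofId A K)
    Subtype.val_injective
  let t : FractionRing A := algebraMap A _ ⟨y * x, hyx⟩ / algebraMap A _ ⟨y, hy⟩
  have ht : φ t = x := by
    rw [map_div₀, AlgHom.commutes, AlgHom.commutes]
    exact mul_div_cancel_left₀ x hy0
  rw [← ht, isIntegral_algHom_iff φ φ.injective] at hx
  obtain ⟨z, hz⟩ := IsIntegrallyClosed.isIntegral_iff.1 hx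
  rw [← ht, ← hz, AlgHom.commutes]
  exact z.2

lemma inv_natCast_mul_pow_mem_of_dvd_coeff_zero (hp : 2 ≤ p) [NeZero (p : K)] {A : Subalgebra S K}
    [IsIntegrallyClosed A] {u : K} (huA : u ∈ A) {F : S[X]} (hu : u ^ p = p * aeval u F)
    (hF : (p : S) ∣ F.coeff 0) : (p : K)⁻¹ * u ^ (p - 1) ∈ A := by
  obtain ⟨a, ha⟩ := hF
  have hpK : (p : K) ≠ 0 := NeZero.ne _
  refine mem_of_isIntegral_of_mul_mem (isIntegral_of_sq_eq (α := ⟨aeval u F.divX, ?_⟩)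
    (δ := ⟨algebraMap S K a * u ^ (p - 2), ?_⟩) ?_) (natCast_mem A p) hpK ?_
  · exact aeval_mem_subalgebra huA _
  · exact A.mul_mem (A.algebraMap_mem a) (A.pow_mem huA _)
  · obtain ⟨q, rfl⟩ := Nat.exists_eq_add_of_le' hp
    rw [aeval_eq_coeff_zero_add, ha, map_mul, map_natCast] at hu
    simp only [Subalgebra.algebraMap_def, Algebra.algebraMap_self_apply, Nat.add_sub_cancel,
      show q + 2 - 1 = q + 1 by omega]
    field_simp
    linear_combination u ^ q * hu
  · rw [mul_inv_cancel_left₀ hpK]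
    exact A.pow_mem huA _

lemma not_dvd_coeff_zero_of_isIntegrallyClosed_adjoin (hp : 2 ≤ p) [NeZero (p : K)]
    (hpS : ¬IsUnit (p : S)) {u : K} [IsIntegrallyClosed (Algebra.adjoin S {u})] {F : S[X]}
    (hF : F.natDegree < p) (hu : u ^ p = p * aeval u F)
    (hlin : LinearIndependent S fun k : Fin p ↦ u ^ (k : ℕ)) : ¬(p : S) ∣ F.coeff 0 := by
  classical
  intro hdvd
  have hu1 : u ∈ Algebra.adjoin S {u} := Algebra.self_mem_adjoin_singleton S u
  have hmem := inv_natCast_mul_pow_mem_of_dvd_coeff_zero hp hu1 hu hdvd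
  obtain ⟨P, hP, hPp, hPu⟩ := exists_monic_aeval_eq_zero hF hu
  rw [← Subalgebra.mem_toSubmodule, ← Submodule.span_range_natDegree_eq_adjoin hP hPu, hPp,
    Finset.coe_image, Finset.coe_range, ← Fin.range_val, ← Set.range_comp] at hmem
  let b := Module.Basis.span hlin
  let m : Fin p := ⟨p - 1, by omega⟩
  have hbm : b m = (p : S) • ⟨_, hmem⟩ := by
    apply Subtype.ext
    rw [Module.Basis.span_apply, Submodule.coe_smul, Algebra.smul_def, map_natCast,
      mul_inv_cancel_left₀ (NeZero.ne _)]
  have hrepr := congr(b.repr $hbm m)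
  rw [Module.Basis.repr_self, Finsupp.single_eq_same, map_smul, Finsupp.smul_apply,
    smul_eq_mul] at hrepr
  exact hpS (.of_mul_eq_one _ hrepr.symm)

end RadicalPolynomial

section Congruences

variable {S : Type*} [CommRing S] {q z a b c e x y h₁ h₂ : S} {p : ℕ}

lemma not_dvd_right_of_isRelPrime_mk (hq : Prime q)
    (hce : IsRelPrime (Ideal.Quotient.mk (Ideal.span {q}) c) (Ideal.Quotient.mk (Ideal.span {q}) e))
    (hc : q ∣ c) : ¬q ∣ e := by
  intro he
  rw [(Ideal.Quotient.eq_zero_iff_dvd q c).2 hc, (Ideal.Quotient.eq_zero_iff_dvd q e).2 he] at hce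
  have := isUnit_zero_iff.1 (hce dvd_rfl dvd_rfl)
  exact hq.not_isUnit (isUnit_of_dvd_one
    ((Ideal.Quotient.eq_zero_iff_dvd q 1).1 ((map_one _).trans this.symm)))

lemma not_dvd_left_of_dvd_mul_pow_add (hq : Prime q)
    (hce : IsRelPrime (Ideal.Quotient.mk (Ideal.span {q}) c) (Ideal.Quotient.mk (Ideal.span {q}) e))
    (ha : ¬q ∣ a) (h : q ∣ a * e ^ p + b * c ^ p) (hp : p ≠ 0) : ¬q ∣ c := by
  intro hc
  rw [dvd_add_left ((dvd_pow hc hp).mul_left b)] at h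
  exact not_dvd_right_of_isRelPrime_mk hq hce hc
    (hq.dvd_of_dvd_pow ((hq.dvd_or_dvd h).resolve_left ha))

-- A congruence modulo `p` becomes a congruence modulo `p²` after raising to the power `p`.
lemma natCast_dvd_mul_pow_add_mul_pow [IsDomain S] (hp : p.Prime) (hpS : Prime (p : S))
    (hxy : (h₁ ^ p + a * p) * (h₂ ^ p + b * p) = x ^ p + y * p ^ 2) :
    (p : S) ∣ a * h₂ ^ p + b * h₁ ^ p := by
  have hdvd : (p : S) ∣ x - h₁ * h₂ := by
    obtain ⟨r, hr⟩ := exists_add_pow_prime_eq hp (x - h₁ * h₂) (h₁ * h₂)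
    rw [sub_add_cancel] at hr
    refine hpS.dvd_of_dvd_pow (n := p) ⟨a * h₂ ^ p + b * h₁ ^ p + p * a * b - y * p -
      (x - h₁ * h₂) * (h₁ * h₂) * r, ?_⟩
    linear_combination -hr - hxy
  obtain ⟨k, hk⟩ : (p : S) ^ 2 ∣ x ^ p - (h₁ * h₂) ^ p := by
    simpa using dvd_sub_pow_of_dvd_sub hdvd 1
  refine ⟨k + y - a * b, mul_left_cancel₀ hpS.ne_zero ?_⟩
  linear_combination hxy + hk

lemma natCast_dvd_mul_pow_add_of_dvd_sub (hpS : Prime (p : S)) (hz : ¬(p : S) ∣ z)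
    (hc : (p : S) ∣ h₁ - z * c) (he : (p : S) ∣ h₂ - z * e)
    (h : (p : S) ∣ a * h₂ ^ p + b * h₁ ^ p) : (p : S) ∣ a * e ^ p + b * c ^ p := by
  have hc' := hc.trans (sub_dvd_pow_sub_pow _ _ p)
  have he' := he.trans (sub_dvd_pow_sub_pow _ _ p)
  have hmul : (p : S) ∣ z ^ p * (a * e ^ p + b * c ^ p) := by
    convert dvd_sub h (dvd_add (he'.mul_left a) (hc'.mul_left b)) using 1
    ring
  exact (hpS.dvd_or_dvd hmul).resolve_left (mt hpS.dvd_of_dvd_pow hz)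

end Congruences

section CombinationOfRadicals

variable {S K : Type*} [CommRing S] [Field K] [Algebra S K] {p : ℕ} {u v x y : K} {F G : S[X]}

lemma algebraMap_mem_weightFiltration_two_of_dvd (hp : 2 ≤ p) {s : S} (hs : (p : S) ∣ s) :
    algebraMap S K s ∈ weightFiltration S p u v 2 := by
  obtain ⟨t, rfl⟩ := hs
  rw [mul_comm, map_mul, map_natCast, ← zpow_one (p : K)]
  exact algebraMap_mul_mem_weightFiltration t
    (weightFiltration_antitone (by omega) (natCast_zpow_mem_weightFiltration 1))

variable [NeZero (p : K)]

lemma aeval_sub_mem_weightFiltration_two (hx : x ∈ weightFiltration S p u v 1) (F : S[X]) :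
    aeval x F - (algebraMap S K (F.coeff 0) + algebraMap S K (F.coeff 1) * x) ∈
      weightFiltration S p u v 2 := by
  have heq : aeval x F - (algebraMap S K (F.coeff 0) + algebraMap S K (F.coeff 1) * x) =
      x ^ 2 * aeval x F.divX.divX := by
    rw [aeval_eq_coeff_zero_add, aeval_eq_coeff_zero_add x F.divX, coeff_divX]
    ring
  rw [heq]
  have hx0 := mem_weightSubalgebra_of_le one_pos.le hx
  simpa using mul_mem_weightFiltration (pow_mem_weightFiltration hx 2)
    (mem_weightSubalgebra.1 (aeval_mem_subalgebra hx0 F.divX.divX))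

lemma exists_add_pow_prime_eq_add_natCast_mul (hp : p.Prime)
    (hx : x ∈ weightFiltration S p u v 1) (hy : y ∈ weightFiltration S p u v 1) :
    ∃ w ∈ weightFiltration S p u v 2, (x + y) ^ p = x ^ p + y ^ p + p * w := by
  let r := ∑ k ∈ Finset.Ioo 0 p, x ^ (k - 1) * y ^ (p - k - 1) * (p.choose k / p : ℕ)
  have hr : r ∈ weightSubalgebra S p u v := by
    refine sum_mem fun k _ ↦ mul_mem (mul_mem (pow_mem ?_ _) (pow_mem ?_ _)) (natCast_mem _ _)
    exacts [mem_weightSubalgebra_of_le one_pos.le hx, mem_weightSubalgebra_of_le one_pos.le hy]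
  refine ⟨x * y * r, ?_, ?_⟩
  · simpa using
      mul_mem_weightFiltration (mul_mem_weightFiltration hx hy) (mem_weightSubalgebra.1 hr)
  · rw [add_pow_prime_eq hp]
    ring

lemma exists_combination_pow_eq (hp : p.Prime) {h₁ h₂ z c e : S} (hF : F.coeff 1 = -h₁ ^ (p - 1))
    (hG : G.coeff 1 = -h₂ ^ (p - 1)) (hu : u ^ p = p * aeval u F) (hv : v ^ p = p * aeval v G)
    (hc : (p : S) ∣ h₁ - z * c) (he : (p : S) ∣ h₂ - z * e)
    (hFG : (p : S) ∣ F.coeff 0 * e ^ p + G.coeff 0 * c ^ p) :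
    ∃ w ∈ weightFiltration S p u v 2, (algebraMap S K c * v + algebraMap S K e * u) ^ p =
      p * (algebraMap S K (-(z * c * e) ^ (p - 1)) *
        (algebraMap S K c * v + algebraMap S K e * u) + w) := by
  have hu1 : u ∈ weightFiltration S p u v 1 := left_mem_weightFiltration
  have hv1 : v ∈ weightFiltration S p u v 1 := right_mem_weightFiltration
  obtain ⟨w, hw, hpow⟩ := exists_add_pow_prime_eq_add_natCast_mul hp
    (algebraMap_mul_mem_weightFiltration c hv1) (algebraMap_mul_mem_weightFiltration e hu1)
  have hF' := algebraMap_mul_mem_weightFiltration (e ^ p)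
    (aeval_sub_mem_weightFiltration_two hu1 F)
  have hG' := algebraMap_mul_mem_weightFiltration (c ^ p)
    (aeval_sub_mem_weightFiltration_two hv1 G)
  have h₀ := algebraMap_mem_weightFiltration_two_of_dvd (u := u) (v := v) hp.two_le hFG
  have h₁' := algebraMap_mul_mem_weightFiltration (e ^ p) (mul_mem_weightFiltration
    (algebraMap_mem_weightFiltration_two_of_dvd hp.two_le
      (hc.trans (sub_dvd_pow_sub_pow _ _ (p - 1)))) hu1)
  have h₂' := algebraMap_mul_mem_weightFiltration (c ^ p) (mul_mem_weightFiltration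
    (algebraMap_mem_weightFiltration_two_of_dvd hp.two_le
      (he.trans (sub_dvd_pow_sub_pow _ _ (p - 1)))) hv1)
  refine ⟨_, sub_mem (sub_mem (add_mem (add_mem hF' hG') (add_mem hw h₀))
    (weightFiltration_antitone (by norm_num) h₁'))
    (weightFiltration_antitone (by norm_num) h₂'), ?_⟩
  obtain ⟨q, rfl⟩ := Nat.exists_eq_add_of_le' hp.one_le
  rw [hpow, mul_pow, mul_pow, hu, hv, hF, hG]
  simp only [map_add, map_sub, map_neg, map_mul, map_pow, Nat.add_sub_cancel]
  ring

end CombinationOfRadicals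

section AlternatingSum

lemma natCast_dvd_choose_sub_one_sub_neg_one_pow {p k : ℕ} (hp : p.Prime) (hk : k < p) :
    (p : ℤ) ∣ (p - 1).choose k - (-1) ^ k := by
  induction k with
  | zero => simp
  | succ k ih =>
    have hchoose : (p : ℤ) ∣ p.choose (k + 1) :=
      Int.natCast_dvd_natCast.2 (hp.dvd_choose_self k.succ_ne_zero hk)
    rw [Nat.choose_eq_choose_pred_add hp.pos k.succ_pos] at hchoose
    convert Int.dvd_sub hchoose (ih (by omega)) using 1
    rw [Nat.succ_sub_one, Nat.cast_add, pow_succ]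
    ring

lemma sup_span_singleton_eq_of_add_mem {S N : Type*} [Ring S] [AddCommGroup N] [Module S N]
    {M : Submodule S N} {x y : N} (h : x + y ∈ M) :
    M ⊔ Submodule.span S {x} = M ⊔ Submodule.span S {y} := by
  have hle {x y : N} (h : x + y ∈ M) : M ⊔ Submodule.span S {x} ≤ M ⊔ Submodule.span S {y} := by
    refine sup_le le_sup_left ((Submodule.span_singleton_le_iff_mem _ _).2 ?_)
    rw [← add_sub_cancel_right x y]
    exact sub_mem (Submodule.mem_sup_left h)
      (Submodule.mem_sup_right (Submodule.mem_span_singleton_self y))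
  exact (hle h).antisymm (hle (add_comm x y ▸ h))

variable {S K : Type*} [CommRing S] [Field K] [Algebra S K] {p : ℕ} {u v τ w : K} {c e α : S}
  {F G : S[X]}

/-- The element `pε` of the integral closure. Up to sign it is `(cᵖvᵖ + eᵖuᵖ) / (cv + eu)`, for
odd `p`. -/
def alternatingSum (p : ℕ) (u v : K) (c e : S) : K :=
  ∑ i ∈ Finset.Icc 1 p, (-1 : K) ^ i * algebraMap S K (c ^ (p - i) * e ^ (i - 1)) *
    v ^ (p - i) * u ^ (i - 1)

lemma alternatingSum_eq_sum_range (p : ℕ) (u v : K) (c e : S) :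
    alternatingSum p u v c e = ∑ k ∈ Finset.range p,
      ((-1) ^ (k + 1) * c ^ (p - 1 - k) * e ^ k) • (u ^ k * v ^ (p - 1 - k)) := by
  rw [alternatingSum, ← Finset.Ico_add_one_right_eq_Icc, Finset.sum_Ico_eq_sum_range,
    Nat.add_sub_cancel]
  refine Finset.sum_congr rfl fun k _ ↦ ?_
  rw [← Nat.sub_sub, Nat.add_sub_cancel_left, Algebra.smul_def]
  simp only [map_mul, map_pow, map_neg, map_one]
  ring

lemma alternatingSum_mem_weightSubalgebra [NeZero (p : K)] :
    alternatingSum p u v c e ∈ weightSubalgebra S p u v := by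
  rw [alternatingSum_eq_sum_range]
  exact sum_mem fun k _ ↦ Subalgebra.smul_mem _
    (mul_mem (pow_mem left_mem_weightSubalgebra k) (pow_mem right_mem_weightSubalgebra _)) _

lemma exists_alternatingSum_add_pow_eq [NeZero (p : K)] (hp : p.Prime) :
    ∃ r ∈ weightFiltration S p u v 0, alternatingSum p u v c e +
      (algebraMap S K c * v + algebraMap S K e * u) ^ (p - 1) = p * r := by
  choose! d hd using fun k (hk : k < p) ↦ natCast_dvd_choose_sub_one_sub_neg_one_pow hp hk
  refine ⟨∑ k ∈ Finset.range p,
    ((d k : S) * c ^ (p - 1 - k) * e ^ k) • (u ^ k * v ^ (p - 1 - k)), ?_, ?_⟩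
  · exact sum_mem fun k _ ↦ Submodule.smul_mem _ _ <| mem_weightSubalgebra.1 <|
      mul_mem (pow_mem left_mem_weightSubalgebra k) (pow_mem right_mem_weightSubalgebra _)
  · rw [alternatingSum_eq_sum_range, add_comm (_ * v), add_pow, Nat.sub_add_cancel hp.one_le,
      ← Finset.sum_add_distrib, Finset.mul_sum]
    refine Finset.sum_congr rfl fun k hk ↦ ?_
    have hk := congr(($(hd k (Finset.mem_range.1 hk)) : K))
    push_cast at hk
    simp only [Algebra.smul_def, map_mul, map_pow, map_neg, map_one, map_intCast, mul_pow]
    linear_combination (algebraMap S K c * v) ^ (p - 1 - k) * (algebraMap S K e * u) ^ k * hk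

lemma weightFiltration_sup_span_alternatingSum [NeZero (p : K)] (hp : p.Prime)
    (hτ : τ = algebraMap S K c * v + algebraMap S K e * u) :
    weightFiltration S p u v 0 ⊔ Submodule.span S {(p : K)⁻¹ * alternatingSum p u v c e} =
      weightFiltration S p u v 0 ⊔ Submodule.span S {(p : K)⁻¹ * τ ^ (p - 1)} := by
  obtain ⟨r, hr, h⟩ := exists_alternatingSum_add_pow_eq (u := u) (v := v) (c := c) (e := e) hp
  refine sup_span_singleton_eq_of_add_mem ?_
  rwa [← mul_add, hτ, h, inv_mul_cancel_left₀ (NeZero.ne _)]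

lemma isIntegral_inv_mul_pow_sub_one [NeZero (p : K)] (hp : 2 ≤ p) (hF : F.natDegree < p)
    (hu : u ^ p = p * aeval u F) (hG : G.natDegree < p) (hv : v ^ p = p * aeval v G)
    (hτ : τ ∈ weightFiltration S p u v 1)
    (hτp : τ ^ p = p * (algebraMap S K α * τ + w)) (hw : w ∈ weightFiltration S p u v 2) :
    IsIntegral S ((p : K)⁻¹ * τ ^ (p - 1)) := by
  have : Algebra.IsIntegral S (weightSubalgebra S p u v) := ⟨fun x ↦
    (isIntegral_algHom_iff (weightSubalgebra S p u v).val Subtype.val_injective).1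
      (isIntegral_of_mem_weightFiltration hF hu hG hv x.2)⟩
  have hδ : (p : K) ^ (-1 : ℤ) * (τ ^ (p - 2) * w) ∈ weightSubalgebra S p u v :=
    mem_weightSubalgebra_of_le (by push_cast [hp]; linarith) <|
      mul_mem_weightFiltration (natCast_zpow_mem_weightFiltration (-1))
        (mul_mem_weightFiltration (pow_mem_weightFiltration hτ (p - 2)) hw)
  refine isIntegral_trans (A := weightSubalgebra S p u v) _
    (isIntegral_of_sq_eq (α := algebraMap S _ α) (δ := ⟨_, hδ⟩) ?_)
  obtain ⟨q, rfl⟩ := Nat.exists_eq_add_of_le' hp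
  have hpK : ((q + 2 : ℕ) : K) ≠ 0 := NeZero.ne _
  simp only [← IsScalarTower.algebraMap_apply, Subalgebra.algebraMap_def,
    Algebra.algebraMap_self_apply, zpow_neg_one, Nat.add_sub_cancel,
    show q + 2 - 1 = q + 1 by omega]
  field_simp
  linear_combination τ ^ q * hτp

lemma repr_weightBasis_eq_of_coe_eq_alternatingSum
    (b : Module.Basis (Fin p × Fin p) S (weightFiltration S p u v 0))
    (hb : ∀ k, (b k : K) = weightBasisMonomial p u v k) {m : weightFiltration S p u v 0}
    (hm : (m : K) = alternatingSum p u v c e) (i : Fin p) :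
    b.repr m (i, i.rev) = (-1) ^ (i + 1 : ℕ) * c ^ (p - 1 - i : ℕ) * e ^ (i : ℕ) := by
  have hsum : m = ∑ k : Fin p,
      ((-1) ^ (k + 1 : ℕ) * c ^ (p - 1 - k : ℕ) * e ^ (k : ℕ)) • b (k, k.rev) := by
    ext
    rw [hm, alternatingSum_eq_sum_range, Finset.sum_range, AddSubmonoidClass.coe_finsetSum]
    refine Finset.sum_congr rfl fun k _ ↦ ?_
    rw [Submodule.coe_smul, hb, weightBasisMonomial, Nat.div_eq_of_lt (by grind)]
    simp [Fin.val_rev, Nat.sub_sub, add_comm]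
  rw [hsum, map_sum, Finsupp.finsetSum_apply, Finset.sum_eq_single i]
  · simp
  · rintro j - hj
    simp [hj]
  · simp

end AlternatingSum

section Descent

variable {S N ι : Type*} [CommRing S] [AddCommGroup N] [Module S N] {q s : S}

lemma dvd_of_dvd_mul_of_isRelPrime {M : Type*} [CommMonoidWithZero M] [IsCancelMulZero M]
    [DecompositionMonoid M] {a b x y : M} (hxy : IsRelPrime x y) (hx : a ∣ b * x)
    (hy : a ∣ b * y) : a ∣ b := by
  obtain ⟨d, d', ⟨b, rfl⟩, hd', rfl⟩ := exists_dvd_and_dvd_of_dvd_mul hx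
  obtain rfl | hd := eq_or_ne d 0
  · simp
  rw [mul_assoc, mul_dvd_mul_iff_left hd] at hy
  exact mul_dvd_mul_left d ((hxy.of_dvd_left hd').dvd_of_dvd_mul_right hy)

lemma exists_eq_smul_of_smul_eq_smul [Module.Free S N] [Module.Finite S N] (hq : Prime q)
    (hs : ¬q ∣ s) {m m' : N} (h : s • m = q • m') : ∃ m'', m = q • m'' := by
  let b := Module.Free.chooseBasis S N
  have hdvd (i) : q ∣ b.repr m i := by
    refine (hq.dvd_or_dvd (?_ : q ∣ s * b.repr m i)).resolve_left hs
    exact ⟨b.repr m' i, by simpa using congr(b.repr $h i)⟩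
  choose f hf using hdvd
  refine ⟨∑ i, f i • b i, ?_⟩
  rw [← b.sum_repr m, Finset.smul_sum]
  exact Finset.sum_congr rfl fun i _ ↦ by rw [hf, mul_smul]

lemma exists_dvd_sub_mul_of_smul_eq (hq : Prime q) [DecompositionMonoid (S ⧸ Ideal.span {q})]
    {P : Type*} [AddCommGroup P] [Module S P] (b : Module.Basis ι S P) {m m₀ y : P} {a : S}
    {i j : ι} (hij : IsRelPrime (Ideal.Quotient.mk (Ideal.span {q}) (b.repr m₀ i))
      (Ideal.Quotient.mk (Ideal.span {q}) (b.repr m₀ j)))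
    (h : s • m = q • y + a • m₀) : ∃ a', q ∣ a - s * a' := by
  have := (Ideal.Quotient.isDomain_iff_prime _).2 ((Ideal.span_singleton_prime hq.ne_zero).2 hq)
  have hdvd (k : ι) : Ideal.Quotient.mk (Ideal.span {q}) s ∣
      Ideal.Quotient.mk _ a * Ideal.Quotient.mk _ (b.repr m₀ k) := by
    refine ⟨Ideal.Quotient.mk _ (b.repr m k), ?_⟩
    rw [← map_mul, ← map_mul, eq_comm, Ideal.Quotient.mk_eq_mk_iff_sub_mem,
      Ideal.mem_span_singleton]
    refine ⟨b.repr y k, sub_eq_iff_eq_add.2 ?_⟩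
    simpa only [map_add, map_smul, Finsupp.add_apply, Finsupp.smul_apply, smul_eq_mul] using
      congr(b.repr $h k)
  obtain ⟨a', ha'⟩ := dvd_of_dvd_mul_of_isRelPrime hij (hdvd i) (hdvd j)
  obtain ⟨a', rfl⟩ := Ideal.Quotient.mk_surjective a'
  rw [← map_mul, Ideal.Quotient.mk_eq_mk_iff_sub_mem, Ideal.mem_span_singleton] at ha'
  exact ⟨a', ha'⟩

variable [IsDomain S] [Module.IsTorsionFree S N] {M : Submodule S N} [Module.Free S M]
  [Module.Finite S M] {x ε : N}

lemma mem_of_smul_mem_of_pow_smul_mem (hq : Prime q) (hs : ¬q ∣ s) (hsx : s • x ∈ M) (n : ℕ)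
    (hx : q ^ n • x ∈ M) : x ∈ M := by
  induction n generalizing x with
  | zero => simpa using hx
  | succ n ih =>
    have hqx : q • x ∈ M := by
      refine ih ?_ (by rwa [smul_smul, ← pow_succ])
      rw [smul_comm]
      exact M.smul_mem q hsx
    obtain ⟨y, hy⟩ := exists_eq_smul_of_smul_eq_smul hq hs (m := (⟨q • x, hqx⟩ : M))
      (m' := ⟨s • x, hsx⟩) (Subtype.ext (smul_comm s q x))
    rw [smul_right_injective N hq.ne_zero congr(($hy : N))]
    exact y.2

lemma mem_sup_span_singleton_of_smul_mem (hq : Prime q) [DecompositionMonoid (S ⧸ Ideal.span {q})]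
    (b : Module.Basis ι S M) (hε : q • ε ∈ M) {i j : ι}
    (hij : IsRelPrime (Ideal.Quotient.mk (Ideal.span {q}) (b.repr ⟨q • ε, hε⟩ i))
      (Ideal.Quotient.mk (Ideal.span {q}) (b.repr ⟨q • ε, hε⟩ j)))
    (hs : ¬q ∣ s) (hsx : s • x ∈ M ⊔ Submodule.span S {ε}) (n : ℕ) (hx : q ^ n • x ∈ M) :
    x ∈ M ⊔ Submodule.span S {ε} := by
  obtain ⟨y, hy, _, h, hsx⟩ := Submodule.mem_sup.1 hsx
  obtain ⟨a, rfl⟩ := Submodule.mem_span_singleton.1 h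
  have hqx : q • x ∈ M := by
    refine mem_of_smul_mem_of_pow_smul_mem hq hs ?_ n ?_
    · rw [smul_comm, ← hsx, smul_add, smul_comm q a]
      exact M.add_mem (M.smul_mem q hy) (M.smul_mem a hε)
    · rw [smul_comm]
      exact M.smul_mem q hx
  have hM : s • (⟨q • x, hqx⟩ : M) = q • ⟨y, hy⟩ + a • ⟨q • ε, hε⟩ :=
    Subtype.ext (by simp [smul_comm s q, ← hsx, smul_comm q a])
  obtain ⟨a', t, ht⟩ := exists_dvd_sub_mul_of_smul_eq hq b hij hM
  have hxε : x - a' • ε ∈ M := by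
    refine mem_of_smul_mem_of_pow_smul_mem hq hs ?_ 1 ?_
    · have : s • (x - a' • ε) = y + t • q • ε := by
        rw [smul_sub, ← hsx, smul_smul, smul_smul, mul_comm t, ← ht, sub_smul]
        abel
      exact this ▸ M.add_mem hy (M.smul_mem t hε)
    · rw [pow_one, smul_sub, smul_comm q a']
      exact M.sub_mem hqx (M.smul_mem a' hε)
  exact Submodule.mem_sup.2 ⟨_, hxε, _,
    Submodule.smul_mem _ a' (Submodule.mem_span_singleton_self ε), sub_add_cancel _ _⟩

end Descent

section Assembly

lemma adjoin_insert_sub_algebraMap {R A : Type*} [CommRing R] [CommRing A] [Algebra R A] (x : A)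
    (r : R) (s : Set A) :
    Algebra.adjoin R (insert (x - algebraMap R A r) s) = Algebra.adjoin R (insert x s) := by
  refine le_antisymm (Algebra.adjoin_le (Set.insert_subset ?_ ?_))
    (Algebra.adjoin_le (Set.insert_subset ?_ ?_))
  · exact sub_mem (Algebra.subset_adjoin (Set.mem_insert x s)) (algebraMap_mem _ r)
  · exact (Set.subset_insert x s).trans Algebra.subset_adjoin
  · simpa using add_mem (Algebra.subset_adjoin (Set.mem_insert (x - algebraMap R A r) s))
      (algebraMap_mem _ r)
  · exact (Set.subset_insert _ s).trans Algebra.subset_adjoin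

lemma adjoin_pair_sub_algebraMap {R A : Type*} [CommRing R] [CommRing A] [Algebra R A] (x y : A)
    (r s : R) :
    Algebra.adjoin R {x - algebraMap R A r, y - algebraMap R A s} = Algebra.adjoin R {x, y} := by
  rw [adjoin_insert_sub_algebraMap, Set.pair_comm, adjoin_insert_sub_algebraMap, Set.pair_comm]

variable {S L K : Type*} [CommRing S] [Field L] [Algebra S L] [FaithfulSMul S L] [Field K]
  [Algebra L K] [Algebra S K] [IsScalarTower S L K] {p : ℕ} {u v : K}

lemma linearIndependent_pow_of_basis (hp : 0 < p) {b : Module.Basis (Fin p × Fin p) L K}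
    (hb : ∀ k, b k = u ^ (k.1 : ℕ) * v ^ (k.2 : ℕ)) :
    (LinearIndependent S fun k : Fin p ↦ u ^ (k : ℕ)) ∧
      LinearIndependent S fun k : Fin p ↦ v ^ (k : ℕ) := by
  have hS := b.linearIndependent.restrict_scalars' S
  have hl := hS.comp (fun k ↦ (k, ⟨0, hp⟩)) fun _ _ h ↦ congrArg Prod.fst h
  have hr := hS.comp (fun k ↦ (⟨0, hp⟩, k)) fun _ _ h ↦ congrArg Prod.snd h
  simpa [Function.comp_def, hb] using And.intro hl hr

variable {F G : S[X]} {c e α : S} {w : K}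

lemma isRelPrime_repr_weightBasis [DecompositionMonoid (S ⧸ Ideal.span {(p : S)})] (hp : 0 < p)
    {b : Module.Basis (Fin p × Fin p) S (weightFiltration S p u v 0)}
    (hb : ∀ k, (b k : K) = weightBasisMonomial p u v k)
    (hce : IsRelPrime (Ideal.Quotient.mk (Ideal.span {(p : S)}) c) (Ideal.Quotient.mk _ e))
    {m : weightFiltration S p u v 0} (hm : (m : K) = alternatingSum p u v c e) :
    ∃ i j, IsRelPrime (Ideal.Quotient.mk (Ideal.span {(p : S)}) (b.repr m i))
      (Ideal.Quotient.mk _ (b.repr m j)) := by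
  refine ⟨_, _, (congrArg₂ (fun s t ↦ IsRelPrime (Ideal.Quotient.mk _ s) (Ideal.Quotient.mk _ t))
    (repr_weightBasis_eq_of_coe_eq_alternatingSum b hb hm ⟨0, hp⟩)
    (repr_weightBasis_eq_of_coe_eq_alternatingSum b hb hm ⟨p - 1, by omega⟩)).mpr ?_⟩
  have hunit (k : ℕ) : IsUnit ((-1 : S ⧸ Ideal.span {(p : S)}) ^ k) := isUnit_neg_one.pow k
  simp only [map_mul, map_pow, map_neg, map_one, pow_zero, mul_one, Nat.sub_self, Nat.sub_zero]
  rw [isRelPrime_mul_unit_left_left (hunit _), isRelPrime_mul_unit_left_right (hunit _)]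
  exact hce.pow

variable [NeZero (p : K)]

lemma exists_finset_card_le_span_eq_weightFiltration_sup (hF : F.natDegree < p)
    (hu : u ^ p = p * aeval u F) (hG : G.natDegree < p) (hv : v ^ p = p * aeval v G) (ε : K) :
    ∃ T : Finset K, T.card ≤ p ^ 2 + 1 ∧
      Submodule.span S (T : Set K) = weightFiltration S p u v 0 ⊔ Submodule.span S {ε} := by
  classical
  refine ⟨insert ε (Finset.univ.image (weightBasisMonomial p u v)), ?_, ?_⟩
  · refine (Finset.card_insert_le _ _).trans (Nat.add_le_add_right ?_ 1)
    exact Finset.card_image_le.trans_eq (by simp [sq])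
  · rw [weightFiltration_zero_eq_span_range hF hu hG hv, Finset.coe_insert, Finset.coe_image,
      Finset.coe_univ, Set.image_univ, Submodule.span_insert, sup_comm]

variable [IsDomain S]

lemma mem_weightFiltration_sup_span_of_isIntegral (hpS : Prime (p : S)) (hp : p.Prime)
    (hp3 : 3 ≤ p) [DecompositionMonoid (S ⧸ Ideal.span {(p : S)})]
    (b : Module.Basis (Fin p × Fin p) L K) (hb : ∀ k, b k = u ^ (k.1 : ℕ) * v ^ (k.2 : ℕ))
    (hF : F.natDegree < p) (hu : u ^ p = p * aeval u F) (hG : G.natDegree < p)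
    (hv : v ^ p = p * aeval v G) (hF0 : ¬(p : S) ∣ F.coeff 0) (hα : ¬(p : S) ∣ α)
    (hc : ¬(p : S) ∣ c)
    (hce : IsRelPrime (Ideal.Quotient.mk (Ideal.span {(p : S)}) c) (Ideal.Quotient.mk _ e))
    (hw : w ∈ weightFiltration S p u v 2)
    (hτp : (algebraMap S K c * v + algebraMap S K e * u) ^ p =
      p * (algebraMap S K α * (algebraMap S K c * v + algebraMap S K e * u) + w))
    {x : K} (hx : IsIntegral S x) {n : ℕ} (hn : (p : K) ^ n * x ∈ weightSubalgebra S p u v) :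
    x ∈ weightFiltration S p u v 0 ⊔
      Submodule.span S {(p : K)⁻¹ * alternatingSum p u v c e} := by
  have := FaithfulSMul.trans S L K
  have : Module.IsTorsionFree S K := .trans_faithfulSMul S L K
  obtain ⟨bW, hbW⟩ := exists_basis_weightFiltration b hb hF hu hG hv
  have := Module.Free.of_basis bW
  have := Module.Finite.of_basis bW
  have hε : (p : S) • ((p : K)⁻¹ * alternatingSum p u v c e) = alternatingSum p u v c e := by
    rw [Algebra.smul_def, map_natCast, mul_inv_cancel_left₀ (NeZero.ne _)]
  have hεW : (p : S) • ((p : K)⁻¹ * alternatingSum p u v c e) ∈ weightFiltration S p u v 0 := by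
    rw [hε]
    exact alternatingSum_mem_weightSubalgebra
  obtain ⟨i, j, hij⟩ := isRelPrime_repr_weightBasis hp.pos hbW hce (m := ⟨_, hεW⟩) hε
  obtain ⟨s, hs, hsx⟩ := exists_smul_mem_weightFiltration_sup_span hpS (hp.odd_of_ne_two (by omega))
    hp3 hF hu hG hv hF0 hα hc rfl hτp hw hx hn
  rw [← weightFiltration_sup_span_alternatingSum hp rfl] at hsx
  refine mem_sup_span_singleton_of_smul_mem hpS bW hεW hij hs hsx n ?_
  rwa [Algebra.smul_def, map_pow, map_natCast]

lemma toSubmodule_integralClosure_eq_sup (hpS : Prime (p : S)) (hp : p.Prime) (hp3 : 3 ≤ p)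
    [DecompositionMonoid (S ⧸ Ideal.span {(p : S)})]
    (b : Module.Basis (Fin p × Fin p) L K) (hb : ∀ k, b k = u ^ (k.1 : ℕ) * v ^ (k.2 : ℕ))
    (hF : F.natDegree < p) (hu : u ^ p = p * aeval u F) (hG : G.natDegree < p)
    (hv : v ^ p = p * aeval v G) (hF0 : ¬(p : S) ∣ F.coeff 0) (hα : ¬(p : S) ∣ α)
    (hc : ¬(p : S) ∣ c)
    (hce : IsRelPrime (Ideal.Quotient.mk (Ideal.span {(p : S)}) c) (Ideal.Quotient.mk _ e))
    (hw : w ∈ weightFiltration S p u v 2)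
    (hτp : (algebraMap S K c * v + algebraMap S K e * u) ^ p =
      p * (algebraMap S K α * (algebraMap S K c * v + algebraMap S K e * u) + w))
    {n : ℕ} (hn : ∀ x : K, IsIntegral S x → (p : K) ^ n * x ∈ weightSubalgebra S p u v) :
    Subalgebra.toSubmodule (integralClosure S K) = weightFiltration S p u v 0 ⊔
      Submodule.span S {(p : K)⁻¹ * alternatingSum p u v c e} := by
  have hτ : algebraMap S K c * v + algebraMap S K e * u ∈ weightFiltration S p u v 1 :=
    add_mem (algebraMap_mul_mem_weightFiltration c right_mem_weightFiltration)
      (algebraMap_mul_mem_weightFiltration e left_mem_weightFiltration)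
  refine le_antisymm (fun x hx ↦ mem_weightFiltration_sup_span_of_isIntegral hpS hp hp3 b hb hF hu
    hG hv hF0 hα hc hce hw hτp hx (hn x hx)) ?_
  rw [weightFiltration_sup_span_alternatingSum hp rfl]
  refine sup_le (fun x hx ↦ isIntegral_of_mem_weightFiltration hF hu hG hv hx)
    ((Submodule.span_singleton_le_iff_mem _ _).2 ?_)
  exact isIntegral_inv_mul_pow_sub_one hp.two_le hF hu hG hv hτ hτp hw

end Assembly

section Radicals

variable {S L K : Type*} [CommRing S] [Field L] [Algebra S L] [Field K] [Algebra L K] [Algebra S K]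
  [IsScalarTower S L K] {p : ℕ}

lemma exists_basis_pow_mul_pow_of_pow_eq {ω μ : K} {f g : S} (hp : p ≠ 0)
    (hω : ω ^ p = algebraMap S K f) (hμ : μ ^ p = algebraMap S K g)
    (hωμ : Algebra.adjoin L {ω, μ} = ⊤) (hdeg : Module.finrank L K = p ^ 2) :
    ∃ b : Module.Basis (Fin p × Fin p) L K, ∀ k, b k = ω ^ (k.1 : ℕ) * μ ^ (k.2 : ℕ) :=
  exists_basis_pow_mul_pow (monic_X_pow_sub_C (algebraMap S L f) hp) (natDegree_X_pow_sub_C)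
    (by simp [hω, ← IsScalarTower.algebraMap_apply])
    (monic_X_pow_sub_C (algebraMap S L g) hp) (natDegree_X_pow_sub_C)
    (by simp [hμ, ← IsScalarTower.algebraMap_apply]) hωμ hdeg

lemma exists_basis_pow_mul_pow_of_pow_eq_natCast_mul_aeval {u v : K} {F G : S[X]}
    (hF : F.natDegree < p) (hu : u ^ p = p * aeval u F) (hG : G.natDegree < p)
    (hv : v ^ p = p * aeval v G) (huv : Algebra.adjoin L {u, v} = ⊤)
    (hdeg : Module.finrank L K = p ^ 2) :
    ∃ b : Module.Basis (Fin p × Fin p) L K, ∀ k, b k = u ^ (k.1 : ℕ) * v ^ (k.2 : ℕ) := by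
  obtain ⟨P, hP, hPp, hPu⟩ := exists_monic_aeval_eq_zero hF hu
  obtain ⟨Q, hQ, hQp, hQv⟩ := exists_monic_aeval_eq_zero hG hv
  exact exists_basis_pow_mul_pow (hP.map (algebraMap S L)) ((hP.natDegree_map _).trans hPp)
    ((aeval_map_algebraMap L u P).trans hPu) (hQ.map (algebraMap S L))
    ((hQ.natDegree_map _).trans hQp) ((aeval_map_algebraMap L v Q).trans hQv) huv hdeg

lemma isIntegrallyClosed_adjoin_sub_algebraMap {R A : Type*} [CommRing R] [CommRing A] [Algebra R A]
    {x : A} (h : IsIntegrallyClosed (Algebra.adjoin R {x})) (r : R) :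
    IsIntegrallyClosed (Algebra.adjoin R {x - algebraMap R A r}) := by
  have heq := adjoin_insert_sub_algebraMap (R := R) x r ∅
  simp only [insert_empty_eq] at heq
  exact .of_equiv (Subalgebra.equivOfEq _ _ heq.symm).toRingEquiv

lemma toSubmodule_integralClosure_eq_sup_of_dvd_sub [IsDomain S] [FaithfulSMul S L]
    [NeZero (p : K)] (hpS : Prime (p : S)) (hp : p.Prime) (hp3 : 3 ≤ p)
    [DecompositionMonoid (S ⧸ Ideal.span {(p : S)})] {u v : K} {F G : S[X]} {h₁ h₂ z c e : S}
    (b : Module.Basis (Fin p × Fin p) L K) (hb : ∀ k, b k = u ^ (k.1 : ℕ) * v ^ (k.2 : ℕ))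
    (hF : F.natDegree < p) (hF0 : ¬(p : S) ∣ F.coeff 0) (hF1 : F.coeff 1 = -h₁ ^ (p - 1))
    (hu : u ^ p = p * aeval u F) (hG : G.natDegree < p) (hG0 : ¬(p : S) ∣ G.coeff 0)
    (hG1 : G.coeff 1 = -h₂ ^ (p - 1)) (hv : v ^ p = p * aeval v G) (hz : ¬(p : S) ∣ z)
    (hce : IsRelPrime (Ideal.Quotient.mk (Ideal.span {(p : S)}) c) (Ideal.Quotient.mk _ e))
    (hzc : (p : S) ∣ h₁ - z * c) (hze : (p : S) ∣ h₂ - z * e)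
    (hFG : (p : S) ∣ F.coeff 0 * h₂ ^ p + G.coeff 0 * h₁ ^ p) {n : ℕ}
    (hn : ∀ x : K, IsIntegral S x → (p : K) ^ n * x ∈ weightSubalgebra S p u v) :
    Subalgebra.toSubmodule (integralClosure S K) = weightFiltration S p u v 0 ⊔
      Submodule.span S {(p : K)⁻¹ * alternatingSum p u v c e} := by
  have hFG' := natCast_dvd_mul_pow_add_of_dvd_sub hpS hz hzc hze hFG
  have hc := not_dvd_left_of_dvd_mul_pow_add hpS hce hF0 hFG' hp.ne_zero
  have he := not_dvd_left_of_dvd_mul_pow_add hpS hce.symm hG0 (by rwa [add_comm]) hp.ne_zero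
  have hα : ¬(p : S) ∣ -(z * c * e) ^ (p - 1) := fun h ↦
    hpS.not_dvd_mul (hpS.not_dvd_mul hz hc) he (hpS.dvd_of_dvd_pow (dvd_neg.1 h))
  obtain ⟨w, hw, hτ⟩ := exists_combination_pow_eq hp hF1 hG1 hu hv hzc hze hFG'
  exact toSubmodule_integralClosure_eq_sup hpS hp hp3 b hb hF hu hG hv hF0 hα hc hce hw hτ hn

end Radicals

theorem stmt11_general
    {S : Type*} [CommRing S] [IsDomain S] [UniqueFactorizationMonoid S]
    {L : Type*} [Field L] [CharZero L] [Algebra S L] [IsFractionRing S L]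
    {K : Type*} [Field K] [Algebra L K] [Algebra S K] [IsScalarTower S L K]
    {p : ℕ} (hp : p.Prime) (hp3 : 3 ≤ p) (hpS : Prime (p : S))
    [DecompositionMonoid (S ⧸ Ideal.span {(p : S)})]
    {f g h₁ h₂ a b : S} (hf : f = h₁ ^ p + a * (p : S)) (hg : g = h₂ ^ p + b * (p : S))
    (hfg : Squarefree (f * g))
    {ω μ : K} (hω : ω ^ p = algebraMap S K f) (hμ : μ ^ p = algebraMap S K g)
    (hKgen : Algebra.adjoin L ({ω, μ} : Set K) = ⊤) (hdeg : Module.finrank L K = p ^ 2)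
    (hicω : IsIntegrallyClosed (Algebra.adjoin S ({ω} : Set K)))
    (hicμ : IsIntegrallyClosed (Algebra.adjoin S ({μ} : Set K)))
    (hfg1 : ∃ x y : S, f * g = x ^ p + y * (p : S) ^ 2)
    (z c e : S) (hz : z ∉ Ideal.span {(p : S)})
    (hce : IsRelPrime (Ideal.Quotient.mk (Ideal.span {(p : S)}) c)
      (Ideal.Quotient.mk (Ideal.span {(p : S)}) e))
    (hzc : h₁ - z * c ∈ Ideal.span {(p : S)}) (hze : h₂ - z * e ∈ Ideal.span {(p : S)}) :
    Subalgebra.toSubmodule (integralClosure S K) =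
      Submodule.span S
        ((Algebra.adjoin S (({ω, μ} : Set K) ∪ {x : K | ∃ i : ℕ, 1 ≤ i ∧ i ≤ p - 1 ∧
            x = (p : K)⁻¹ * ((ω - algebraMap S K h₁) ^ i *
              (μ - algebraMap S K h₂) ^ (p - i))}) : Set K) ∪
          {(p : K)⁻¹ * ∑ i ∈ Finset.Icc 1 p, (-1 : K) ^ i *
            algebraMap S K (c ^ (p - i) * e ^ (i - 1)) *
              (μ - algebraMap S K h₂) ^ (p - i) * (ω - algebraMap S K h₁) ^ (i - 1)}) ∧
    ∃ T : Finset K, T.card ≤ p ^ 2 + 1 ∧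
      Submodule.span S (T : Set K) = Subalgebra.toSubmodule (integralClosure S K) := by
  have := charZero_of_injective_algebraMap (algebraMap L K).injective
  have := NeZero.mk hp.ne_zero
  have := isIntegrallyClosed_adjoin_sub_algebraMap hicω h₁
  have := isIntegrallyClosed_adjoin_sub_algebraMap hicμ h₂
  simp only [Ideal.mem_span_singleton] at hz hzc hze
  obtain ⟨x, y, hxy⟩ := hfg1
  subst hf hg
  obtain ⟨F, hF, hF0, hF1, hu⟩ := exists_pow_eq_natCast_mul_aeval hp hω
  obtain ⟨G, hG, hG0, hG1, hv⟩ := exists_pow_eq_natCast_mul_aeval hp hμ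
  have huv := adjoin_pair_sub_algebraMap ω μ (algebraMap S L h₁) (algebraMap S L h₂)
  simp only [← IsScalarTower.algebraMap_apply, hKgen] at huv
  obtain ⟨bωμ, hbωμ⟩ := exists_basis_pow_mul_pow_of_pow_eq hp.ne_zero hω hμ hKgen hdeg
  obtain ⟨buv, hbuv⟩ := exists_basis_pow_mul_pow_of_pow_eq_natCast_mul_aeval hF hu hG hv huv hdeg
  obtain ⟨hlinu, hlinv⟩ := linearIndependent_pow_of_basis (S := S) hp.pos hbuv
  have ha := not_dvd_coeff_zero_of_isIntegrallyClosed_adjoin hp.two_le hpS.not_isUnit hF hu hlinu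
  have hb := not_dvd_coeff_zero_of_isIntegrallyClosed_adjoin hp.two_le hpS.not_isUnit hG hv hlinv
  have hab := natCast_dvd_mul_pow_add_mul_pow hp hpS hxy
  have hE := weightSubalgebra_eq_adjoin (ω := ω) (μ := μ) rfl rfl hF hu hG hv
  have hR := toSubmodule_integralClosure_eq_sup_of_dvd_sub hpS hp hp3 buv hbuv hF ha hF1 hu hG hb
    hG1 hv hz hce hzc hze (hF0 ▸ hG0 ▸ hab) fun x hx ↦
      natCast_sq_mul_mem_of_isIntegral hω hμ hfg hbωμ (hE ▸ Algebra.subset_adjoin (by simp))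
        (hE ▸ Algebra.subset_adjoin (by simp)) hx
  refine ⟨?_, hR ▸ exists_finset_card_le_span_eq_weightFiltration_sup hF hu hG hv _⟩
  rw [Submodule.span_union, ← hE]
  exact hR.trans (congrArg (· ⊔ _) (Submodule.span_eq _).symm)

theorem stmt11
    {S : Type*} [CommRing S] [IsDomain S] [IsNoetherianRing S] [IsLocalRing S]
    [IsIntegrallyClosed S]
    {L : Type*} [Field L] [CharZero L] [Algebra S L] [IsFractionRing S L]
    {K : Type*} [Field K] [Algebra L K] [Algebra S K] [IsScalarTower S L K]
    {p : ℕ} (hp : p.Prime) (hp3 : 3 ≤ p) (hpS : Prime ((p : ℕ) : S))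
    (hSmodp : IsIntegrallyClosed (S ⧸ Ideal.span {((p : ℕ) : S)}))
    (hreg : ∃ s : Finset S, Ideal.span (s : Set S) = IsLocalRing.maximalIdeal S ∧
      (s.card : WithBot ℕ∞) = ringKrullDim S)
    (hmix : ((p : ℕ) : S) ∈ IsLocalRing.maximalIdeal S ∧
      ((p : ℕ) : S) ∉ IsLocalRing.maximalIdeal S ^ 2)
    {f g h₁ h₂ a b : S} (hf : f = h₁ ^ p + a * (p : S)) (hg : g = h₂ ^ p + b * (p : S))
    (hfg : (¬IsUnit f ∧ ¬IsUnit g ∧ PaperSquarefree f ∧ PaperSquarefree g ∧ SatisfiesA1 f g) ∨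
      (IsUnit f ∧ IsUnit g ∧ (∀ x : S, x ^ p ≠ f) ∧ (∀ x : S, x ^ p ≠ g)))
    {ω μ : K} (hω : ω ^ p = algebraMap S K f) (hμ : μ ^ p = algebraMap S K g)
    (hKgen : Algebra.adjoin L ({ω, μ} : Set K) = ⊤)
    (hdeg : Module.finrank L K = p ^ 2)
    (hicω : IsIntegrallyClosed (Algebra.adjoin S ({ω} : Set K)))
    (hicμ : IsIntegrallyClosed (Algebra.adjoin S ({μ} : Set K)))
    (hh₁ : h₁ ≠ 0) (hh₂ : h₂ ≠ 0)
    (hfg1 : ∃ x y : S, f * g = x ^ p + y * (p : S) ^ 2)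
    (z c e : S) (hz : z ∉ Ideal.span {((p : ℕ) : S)})
    (hce : IsRelPrime (Ideal.Quotient.mk (Ideal.span {((p : ℕ) : S)}) c)
      (Ideal.Quotient.mk (Ideal.span {((p : ℕ) : S)}) e))
    (hc1 : h₁ - z * c ∈ Ideal.span {((p : ℕ) : S)})
    (hc2 : h₂ - z * e ∈ Ideal.span {((p : ℕ) : S)}) :
    Subalgebra.toSubmodule (integralClosure S K) =
      Submodule.span S
        ((Algebra.adjoin S (({ω, μ} : Set K) ∪ {x : K | ∃ i : ℕ, 1 ≤ i ∧ i ≤ p - 1 ∧ x = (p : K)⁻¹ * ((ω - algebraMap S K h₁) ^ i * (μ - algebraMap S K h₂) ^ (p - i))}) : Set K) ∪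
          {(p : K)⁻¹ * ∑ i ∈ Finset.Icc 1 p, (-1 : K) ^ i * algebraMap S K (c ^ (p - i) * e ^ (i - 1)) * (μ - algebraMap S K h₂) ^ (p - i) * (ω - algebraMap S K h₁) ^ (i - 1)}) ∧
    ∃ T : Finset K, T.card ≤ p ^ 2 + 1 ∧
      Submodule.span S (T : Set K) = Subalgebra.toSubmodule (integralClosure S K) := by
  obtain ⟨s, hs, hcard⟩ := hreg
  have := isRegularLocalRing_of_span_eq_maximalIdeal hs hcard
  have := isRegularLocalRing_quotient_span_singleton hmix.1 hmix.2
  have := uniqueFactorizationMonoid_of_isRegularLocalRing S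
  have := uniqueFactorizationMonoid_of_isRegularLocalRing (S ⧸ Ideal.span {(p : S)})
  have := (Ideal.span_singleton_prime hpS.ne_zero).2 hpS
  exact stmt11_general hp hp3 hpS hf hg
    (squarefree_mul_of_paperSquarefree_or_isUnit ⟨_, hpS.irreducible⟩
      (hfg.imp (·.2.2) fun h ↦ ⟨h.1, h.2.1⟩))
    hω hμ hKgen hdeg hicω hicμ hfg1 z c e hz hce hc1 hc2
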